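/- arXiv:2301.11192 — 2 statements merged into one kernel-verified Lean document; each statement's English description precedes it below -/
import Mathlib

section
/- Let p ≥ 5 be a prime with p ≠ 11. If b₂₁((11p^2 − 5)/6) is odd, then for every integer k ≥ 0, b₂₁((11p^{4k} − 5)/6) is odd. -/
/-- `b21 n` is the number of 21-regular partitions of `n`,
i.e. partitions of `n` none of whose parts is divisible by 21. -/
def b21 (n : ℕ) : ℕ :=
  (Finset.univ.filter fun c : n.Partition => ∀ i ∈ c.parts, ¬ (21 ∣ i)).card

/-!
Let `fₖ = ∏ (1 - q ^ (k * n))`, so `∑ b₂₁(n) q ^ n = f₂₁ / f₁`. Counting points on norm forms of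
`ℤ√(-2)` and `ℤ√(-7)` modulo `2` gives congruences between theta series, and these yield
`∑ b₂₁(4n + 1) q ^ n ≡ f₃ ∑ q ^ m`, where `m` runs over the numbers with `3m + 1` a square. Hence
`b₂₁(4n + 1)` has the parity of the number of `(x, y) ∈ ℕ²` with `3x² + 8y² = 24n + 11` and `3 ∤ x`,
in other words of the `z = 3x + y√(-24)` of norm `3(24n + 11)` in that quadrant with `9 ∤ re z`.

When `24n + 11 = 11p ^ (2j)`, division by `3 + √(-24)`, of norm `33`, turns this into the number of
`w` of norm `p ^ (2j)`, up to sign, with `3 ∤ re w + im w`. If `3 ∣ im w` for all `w` of this norm,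
the condition is void, and conjugation is an involution of these `w` with the single fixed point
`p ^ j`: the number is odd. For `j = 1` the converse holds: up to sign and conjugation there is at
most one `w ≠ p` of norm `p²`, and if `3 ∤ im w` then exactly one of `w`, `star w` is counted along
with `p`. Since every `w` of norm `p ^ (2j)` is, up to sign, a product of elements of norm `p²`, the
divisibility `3 ∣ im w` passes from norm `p²` to norm `p ^ (2j)`.
-/

lemma pow_dvd_xor_pow_dvd_of_prime {p a b : ℤ} (hp : Prime p) {n : ℕ} (hn : n ≠ 0)
    (hab : p ^ n ∣ a * b) (hsum : ¬ p ∣ a + b) : Xor (p ^ n ∣ a) (p ^ n ∣ b) := by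
  have hpn {c : ℤ} : p ^ n ∣ c → p ∣ c := (dvd_pow_self p hn).trans
  by_cases ha : p ∣ a
  · have hb : ¬ p ∣ b := fun hb => hsum (dvd_add ha hb)
    exact .inl ⟨hp.pow_dvd_of_dvd_mul_right n hb hab, mt hpn hb⟩
  · exact .inr ⟨hp.pow_dvd_of_dvd_mul_left n ha hab, mt hpn ha⟩

section Zsqrtd

variable {d : ℤ}

lemma eq_of_mul_eq_mul_left_of_norm_ne_zero {π z w : ℤ√d} (hπ : π.norm ≠ 0)
    (h : π * z = π * w) : z = w := by
  refine Zsqrtd.eq_of_smul_eq_smul_left hπ ?_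
  rw [Zsqrtd.norm_eq_mul_conj]
  linear_combination star π * h

lemma dvd_iff_norm_dvd_star_mul {π z : ℤ√d} (hπ : π.norm ≠ 0) :
    π ∣ z ↔ ((π.norm : ℤ) : ℤ√d) ∣ star π * z := by
  constructor
  · rintro ⟨w, rfl⟩
    exact ⟨w, by rw [Zsqrtd.norm_eq_mul_conj]; ring⟩
  · rintro ⟨w, hw⟩
    refine ⟨w, Zsqrtd.eq_of_smul_eq_smul_left hπ ?_⟩
    rw [Zsqrtd.norm_eq_mul_conj] at hw ⊢
    linear_combination π * hw

lemma intCast_dvd_of_dvd_im {k : ℤ} {z : ℤ√d} (hN : k ^ 2 ∣ z.norm) (him : k ∣ z.im) :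
    (k : ℤ√d) ∣ z := by
  have hre : k ^ 2 ∣ z.re ^ 2 := by
    have h := dvd_add hN ((pow_dvd_pow_of_dvd him 2).mul_left d)
    rwa [Zsqrtd.norm_def, show z.re * z.re - d * z.im * z.im + d * z.im ^ 2 = z.re ^ 2 by ring] at h
  exact (Zsqrtd.intCast_dvd k z).2 ⟨(Int.pow_dvd_pow_iff two_ne_zero).1 hre, him⟩

lemma not_dvd_re_and_not_dvd_im_of_prime {p : ℤ} (hp : Prime p) (hpd : ¬ p ∣ d) {z : ℤ√d}
    (hN : p ∣ z.norm) (hz : ¬ (p : ℤ√d) ∣ z) : ¬ p ∣ z.re ∧ ¬ p ∣ z.im := by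
  rw [Zsqrtd.intCast_dvd] at hz
  have hN' : p ∣ z.re ^ 2 - d * z.im ^ 2 := by
    convert hN using 1
    rw [Zsqrtd.norm_def]
    ring
  refine ⟨fun hre => hz ⟨hre, ?_⟩, fun him => hz ⟨?_, him⟩⟩
  · have : p ∣ d * z.im ^ 2 := (dvd_sub_right (dvd_pow hre two_ne_zero)).1 hN'
    exact hp.dvd_of_dvd_pow ((hp.dvd_or_dvd this).resolve_left hpd)
  · exact hp.dvd_of_dvd_pow
      ((dvd_sub_left ((dvd_pow him two_ne_zero).mul_left d)).1 hN')

/- The imaginary parts of `z * w` and `z * star w` have product `z.im² N(w) - w.im² N(z)` and sum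
`2 z.im w.re`, so `p ^ n` divides one of them. -/
lemma pow_dvd_mul_or_pow_dvd_mul_star {p : ℤ} (hp : Prime p) (hp2 : ¬ p ∣ 2) (hpd : ¬ p ∣ d)
    {n : ℕ} {z w : ℤ√d} (hz : ¬ (p : ℤ√d) ∣ z) (hw : ¬ (p : ℤ√d) ∣ w)
    (hNz : p ^ n ∣ z.norm) (hNw : p ^ n ∣ w.norm) :
    ((p ^ n : ℤ) : ℤ√d) ∣ z * w ∨ ((p ^ n : ℤ) : ℤ√d) ∣ z * star w := by
  rcases n.eq_zero_or_pos with rfl | hn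
  · exact .inl ((Zsqrtd.intCast_dvd _ _).2 ⟨by simp, by simp⟩)
  have hprod : p ^ n ∣ (z * w).im * (z * star w).im := by
    rw [show (z * w).im * (z * star w).im = z.im ^ 2 * w.norm - w.im ^ 2 * z.norm by
      simp only [Zsqrtd.im_mul, Zsqrtd.re_star, Zsqrtd.im_star, Zsqrtd.norm_def]
      ring]
    exact dvd_sub (hNw.mul_left _) (hNz.mul_left _)
  have hsum : ¬ p ∣ (z * w).im + (z * star w).im := by
    have hpn := dvd_pow_self p hn.ne'
    rw [show (z * w).im + (z * star w).im = 2 * (z.im * w.re) by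
      simp only [Zsqrtd.im_mul, Zsqrtd.re_star, Zsqrtd.im_star]; ring]
    simp only [hp.dvd_mul, not_or]
    exact ⟨hp2, (not_dvd_re_and_not_dvd_im_of_prime hp hpd (hpn.trans hNz) hz).2,
      (not_dvd_re_and_not_dvd_im_of_prime hp hpd (hpn.trans hNw) hw).1⟩
  have hNmul {u : ℤ√d} (hu : p ^ n ∣ u.norm) : (p ^ n) ^ 2 ∣ (z * u).norm := by
    rw [Zsqrtd.norm_mul, pow_two]
    exact mul_dvd_mul hNz hu
  exact (pow_dvd_xor_pow_dvd_of_prime hp hn.ne' hprod hsum).or.imp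
    (intCast_dvd_of_dvd_im (hNmul hNw))
    (intCast_dvd_of_dvd_im (hNmul (by rwa [Zsqrtd.norm_conj])))

lemma eq_one_or_eq_neg_one_of_norm_eq_one (hd : d < -1) {u : ℤ√d} (hu : u.norm = 1) :
    u = 1 ∨ u = -1 := by
  have him : u.im = 0 := by
    rw [Zsqrtd.norm_def] at hu
    by_contra him
    nlinarith [sq_nonneg u.re, Int.one_le_abs him, sq_abs u.im, abs_nonneg u.im]
  have hre : u.re = 1 ∨ u.re = -1 := by
    rwa [Zsqrtd.norm_def, him, mul_zero, sub_zero, ← pow_two, sq_eq_one_iff] at hu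
  exact hre.imp (fun h => Zsqrtd.ext h him) (fun h => Zsqrtd.ext h (by simp [him]))

lemma not_dvd_of_norm_eq_sq (hd : d < -1) {p : ℤ} (hp : p ≠ 0) {w : ℤ√d}
    (hw : w.norm = p ^ 2) (him : w.im ≠ 0) : ¬ (p : ℤ√d) ∣ w := by
  rintro ⟨u, rfl⟩
  have hu : u.norm = 1 := by
    rw [Zsqrtd.norm_mul, Zsqrtd.norm_intCast, ← pow_two] at hw
    exact mul_left_cancel₀ (pow_ne_zero 2 hp) (hw.trans (mul_one _).symm)
  rcases eq_one_or_eq_neg_one_of_norm_eq_one hd hu with rfl | rfl <;> simp at him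

lemma eq_or_eq_neg_of_norm_dvd_mul_star (hd : d < -1) {z w : ℤ√d} (hw : w.norm ≠ 0)
    (hzw : z.norm = w.norm) (h : ((w.norm : ℤ) : ℤ√d) ∣ z * star w) : z = w ∨ z = -w := by
  rw [mul_comm, ← dvd_iff_norm_dvd_star_mul hw] at h
  obtain ⟨u, rfl⟩ := h
  have hu : u.norm = 1 := by
    rw [Zsqrtd.norm_mul] at hzw
    exact mul_left_cancel₀ hw (hzw.trans (mul_one _).symm)
  rcases eq_one_or_eq_neg_one_of_norm_eq_one hd hu with rfl | rfl <;> simp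

lemma eq_or_eq_neg_or_star_of_norm_eq_prime_pow (hd : d < -1) {p : ℤ} (hp : Prime p)
    (hp2 : ¬ p ∣ 2) (hpd : ¬ p ∣ d) {n : ℕ} {z w : ℤ√d} (hNz : z.norm = p ^ n)
    (hNw : w.norm = p ^ n) (hz : ¬ (p : ℤ√d) ∣ z) (hw : ¬ (p : ℤ√d) ∣ w) :
    z = w ∨ z = -w ∨ z = star w ∨ z = -star w := by
  have hpn : p ^ n ≠ 0 := pow_ne_zero n hp.ne_zero
  rcases pow_dvd_mul_or_pow_dvd_mul_star hp hp2 hpd hz hw (dvd_of_eq hNz.symm)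
    (dvd_of_eq hNw.symm) with h | h
  · have := eq_or_eq_neg_of_norm_dvd_mul_star hd (w := star w) (z := z)
      (by rwa [Zsqrtd.norm_conj, hNw]) (by rw [Zsqrtd.norm_conj, hNz, hNw])
      (by rwa [Zsqrtd.norm_conj, hNw, star_star])
    tauto
  · have := eq_or_eq_neg_of_norm_dvd_mul_star hd (w := w) (z := z) (by rwa [hNw])
      (by rw [hNz, hNw]) (by rwa [hNw])
    tauto

/- Peel off one element of norm `p ^ 2` at a time: `z` is divisible by `p`, or by `w` or
`star w` for some `w` of norm `p ^ 2`. -/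
lemma dvd_im_of_norm_eq_pow_two_mul (hd : d < -1) {p q : ℤ} (hp : Prime p) (hp2 : ¬ p ∣ 2)
    (hpd : ¬ p ∣ d) (hq : ∀ w : ℤ√d, w.norm = p ^ 2 → q ∣ w.im)
    (hex : ∀ z : ℤ√d, p ∣ z.norm → ¬ (p : ℤ√d) ∣ z →
      ∃ w : ℤ√d, w.norm = p ^ 2 ∧ ¬ (p : ℤ√d) ∣ w) (j : ℕ) :
    ∀ z : ℤ√d, z.norm = p ^ (2 * j) → q ∣ z.im := by
  have hp0 : p ^ 2 ≠ 0 := pow_ne_zero 2 hp.ne_zero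
  have hfactor {i : ℕ} {w z : ℤ√d} (hw : w.norm = p ^ 2)
      (h : (w * z).norm = p ^ (2 * (i + 1))) : z.norm = p ^ (2 * i) := by
    rw [Zsqrtd.norm_mul, hw, mul_add_one, pow_add, mul_comm (p ^ (2 * i))] at h
    exact mul_left_cancel₀ hp0 h
  induction j with
  | zero =>
    intro z hz
    rcases eq_one_or_eq_neg_one_of_norm_eq_one hd (hz.trans (pow_zero p)) with rfl | rfl <;> simp
  | succ j ih =>
    intro z hz
    suffices ∃ w : ℤ√d, w.norm = p ^ 2 ∧ w ∣ z by
      obtain ⟨w, hw, u, rfl⟩ := this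
      rw [Zsqrtd.im_mul]
      exact dvd_add ((ih u (hfactor hw hz)).mul_left _) ((hq w hw).mul_right _)
    by_cases hpz : (p : ℤ√d) ∣ z
    · exact ⟨p, by rw [Zsqrtd.norm_intCast, pow_two], hpz⟩
    have hNz : p ^ 2 ∣ z.norm := hz ▸ pow_dvd_pow p (by lia)
    obtain ⟨w, hw, hpw⟩ := hex z ((dvd_pow_self p two_ne_zero).trans hNz) hpz
    have hNw : (star w).norm = p ^ 2 := by rwa [Zsqrtd.norm_conj]
    rcases pow_dvd_mul_or_pow_dvd_mul_star hp hp2 hpd hpz hpw hNz (dvd_of_eq hw.symm) with h | h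
    · refine ⟨star w, hNw, (dvd_iff_norm_dvd_star_mul (hNw ▸ hp0)).2 ?_⟩
      rwa [hNw, star_star, mul_comm]
    · refine ⟨w, hw, (dvd_iff_norm_dvd_star_mul (hw ▸ hp0)).2 ?_⟩
      rwa [hw, mul_comm]

end Zsqrtd

section Thue

lemma exists_sq_lt_sq_lt_eq_mul {n : ℕ} (hn : ¬ IsSquare n) (t : ZMod n) :
    ∃ x y : ℤ, (x, y) ≠ 0 ∧ x ^ 2 < n ∧ y ^ 2 < n ∧ (x : ZMod n) = t * y := by
  have : NeZero n := ⟨by rintro rfl; exact hn .zero⟩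
  let A := Finset.range (n.sqrt + 1) ×ˢ Finset.range (n.sqrt + 1)
  obtain ⟨⟨a, b⟩, hab, ⟨a', b'⟩, hab', hne, heq⟩ :=
    Finset.exists_ne_map_eq_of_card_lt_of_maps_to (s := A) (t := Finset.univ)
      (f := fun q => (q.1 : ZMod n) - t * q.2)
      (by simpa [A, ZMod.card] using n.lt_succ_sqrt)
      (fun _ _ => Finset.mem_coe.2 (Finset.mem_univ _))
  simp only [A, Finset.mem_product, Finset.mem_range] at hab hab'
  have hsqrt : (n.sqrt : ℤ) ^ 2 < n := by
    exact_mod_cast n.sqrt_le'.lt_of_ne fun h => hn ⟨n.sqrt, by rw [← pow_two, h]⟩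
  refine ⟨a - a', b - b', fun h => hne ?_, ?_, ?_, ?_⟩
  · simp only [Prod.mk_eq_zero] at h
    ext <;> lia
  · exact (sq_le_sq' (by lia) (by lia)).trans_lt hsqrt
  · exact (sq_le_sq' (by lia) (by lia)).trans_lt hsqrt
  · push_cast
    linear_combination heq

lemma exists_sq_add_six_mul_sq_or_of_mul {n x y m : ℤ} (hm0 : 0 < m) (hm7 : m < 7)
    (h : x ^ 2 + 6 * y ^ 2 = m * n) :
    ∃ a b : ℤ, a ^ 2 + 6 * b ^ 2 = n ∨ 2 * a ^ 2 + 3 * b ^ 2 = n := by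
  have even_of {z : ℤ} (hz : 2 ∣ z ^ 2) : 2 ∣ z := Int.prime_two.dvd_of_dvd_pow hz
  have three_of {z : ℤ} (hz : 3 ∣ z ^ 2) : 3 ∣ z := Int.prime_three.dvd_of_dvd_pow hz
  interval_cases m
  · exact ⟨x, y, .inl (by linarith)⟩
  · obtain ⟨z, rfl⟩ := even_of (z := x) (by lia)
    exact ⟨z, y, .inr (by linarith)⟩
  · obtain ⟨z, rfl⟩ := three_of (z := x) (by lia)
    exact ⟨y, z, .inr (by linarith)⟩
  · obtain ⟨z, rfl⟩ := even_of (z := x) (by lia)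
    obtain ⟨w, rfl⟩ := even_of (z := y) (by lia)
    exact ⟨z, w, .inl (by linarith)⟩
  · have h5 : 5 ∣ (x - 2 * y) * (x + 2 * y) := ⟨n - 2 * y ^ 2, by linear_combination h⟩
    have p5 : Prime (5 : ℤ) := Int.prime_ofNat_iff.2 (by norm_num)
    rcases p5.dvd_or_dvd h5 with ⟨s, hs⟩ | ⟨s, hs⟩
    · obtain rfl : x = 2 * y + 5 * s := by linarith
      exact ⟨y + s, s, .inr (by linarith)⟩
    · obtain rfl : x = -2 * y + 5 * s := by linarith
      exact ⟨-y + s, s, .inr (by linarith)⟩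
  · obtain ⟨z, rfl⟩ := even_of (z := x) (by lia)
    obtain ⟨w, rfl⟩ := three_of (z := z) (by lia)
    exact ⟨y, w, .inl (by linarith)⟩

lemma exists_sq_add_six_mul_sq_or {n : ℕ} (hn : ¬ IsSquare n) {t : ZMod n} (ht : t ^ 2 = -6) :
    ∃ a b : ℤ, a ^ 2 + 6 * b ^ 2 = n ∨ 2 * a ^ 2 + 3 * b ^ 2 = n := by
  obtain ⟨x, y, hxy, hx, hy, h⟩ := exists_sq_lt_sq_lt_eq_mul hn t
  obtain ⟨m, hm⟩ : (n : ℤ) ∣ x ^ 2 + 6 * y ^ 2 := by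
    rw [← ZMod.intCast_zmod_eq_zero_iff_dvd]
    push_cast
    rw [h]
    linear_combination (y : ZMod n) ^ 2 * ht
  have hpos : 0 < x ^ 2 + 6 * y ^ 2 := by
    rcases not_and_or.1 (mt Prod.mk_eq_zero.2 hxy) with hx0 | hy0 <;> positivity
  rw [mul_comm (n : ℤ)] at hm
  exact exists_sq_add_six_mul_sq_or_of_mul (by nlinarith [n.cast_nonneg (α := ℤ)])
    (by nlinarith) hm

lemma not_dvd_prime_pow {p q : ℕ} (hp : p.Prime) (hq : q.Prime) (hqp : q ≠ p) (n : ℕ) :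
    ¬ (q : ℤ) ∣ (p : ℤ) ^ n := fun h =>
  hqp ((Nat.prime_dvd_prime_iff_eq hq hp).1 (hq.dvd_of_dvd_pow (by exact_mod_cast h)))

lemma not_dvd_of_prime_of_ne {p q : ℕ} (hp : p.Prime) (hq : q.Prime) (hqp : q ≠ p) :
    ¬ (q : ℤ) ∣ p := by
  simpa only [pow_one] using not_dvd_prime_pow hp hq hqp 1

lemma not_dvd_neg_twentyFour {p : ℕ} (hp : p.Prime) (hp5 : 5 ≤ p) : ¬ (p : ℤ) ∣ -24 := by
  rw [dvd_neg]
  norm_cast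
  rw [show 24 = 2 ^ 3 * 3 by norm_num, hp.dvd_mul, not_or]
  exact ⟨fun h => by have := Nat.le_of_dvd two_pos (hp.dvd_of_dvd_pow h); lia,
    Nat.not_dvd_of_pos_of_lt three_pos (by lia)⟩

lemma exists_sq_eq_neg_six_of_dvd_norm {p : ℕ} (hp : p.Prime) (hp5 : 5 ≤ p) {z : ℤ√(-24)}
    (hN : (p : ℤ) ∣ z.norm) (hz : ¬ ((p : ℤ) : ℤ√(-24)) ∣ z) : ∃ t : ZMod p, t ^ 2 = -6 := by
  have : Fact p.Prime := ⟨hp⟩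
  have him : (z.im : ZMod p) ≠ 0 := by
    rw [Ne, ZMod.intCast_zmod_eq_zero_iff_dvd]
    exact (not_dvd_re_and_not_dvd_im_of_prime (Nat.prime_iff_prime_int.1 hp)
      (not_dvd_neg_twentyFour hp hp5) hN hz).2
  have h2 : (2 : ZMod p) ≠ 0 := by
    exact_mod_cast (ZMod.natCast_eq_zero_iff 2 p).not.2 (Nat.not_dvd_of_pos_of_lt two_pos (by lia))
  have hN0 : (z.re : ZMod p) ^ 2 + 24 * (z.im : ZMod p) ^ 2 = 0 := by
    rw [← ZMod.intCast_zmod_eq_zero_iff_dvd, Zsqrtd.norm_def] at hN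
    push_cast at hN
    linear_combination hN
  refine ⟨z.re / (2 * z.im), ?_⟩
  field_simp
  linear_combination hN0

lemma exists_norm_eq_sq_and_im_ne_zero {p : ℕ} (hp : p.Prime) (hp5 : 5 ≤ p) {z : ℤ√(-24)}
    (hN : (p : ℤ) ∣ z.norm) (hz : ¬ ((p : ℤ) : ℤ√(-24)) ∣ z) :
    ∃ w : ℤ√(-24), w.norm = (p : ℤ) ^ 2 ∧ w.im ≠ 0 := by
  obtain ⟨t, ht⟩ := exists_sq_eq_neg_six_of_dvd_norm hp hp5 hN hz
  have h2 := not_dvd_of_prime_of_ne hp Nat.prime_two (by lia)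
  have h3 := not_dvd_of_prime_of_ne hp Nat.prime_three (by lia)
  have hsq := (Irreducible.not_isSquare hp : ¬ IsSquare p)
  obtain ⟨a, b, h | h⟩ := exists_sq_add_six_mul_sq_or hsq ht
  · refine ⟨⟨a ^ 2 - 6 * b ^ 2, a * b⟩, by rw [Zsqrtd.norm_def, ← h]; ring, mul_ne_zero ?_ ?_⟩
    · rintro rfl
      lia
    · rintro rfl
      exact hsq (Int.isSquare_natCast_iff.1 ⟨a, by linarith⟩)
  · refine ⟨⟨2 * a ^ 2 - 3 * b ^ 2, a * b⟩, by rw [Zsqrtd.norm_def, ← h]; ring,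
      mul_ne_zero ?_ ?_⟩
    · rintro rfl
      lia
    · rintro rfl
      lia

end Thue

section HalfPlane

variable {d : ℤ}

lemma dvd_iff_norm_dvd_im_star_mul {π z : ℤ√d} (hπ : π.norm ≠ 0) (hz : π.norm ∣ z.norm) :
    π ∣ z ↔ π.norm ∣ (star π * z).im := by
  rw [dvd_iff_norm_dvd_star_mul hπ]
  refine ⟨fun h => ((Zsqrtd.intCast_dvd _ _).1 h).2, intCast_dvd_of_dvd_im ?_⟩
  rw [Zsqrtd.norm_mul, Zsqrtd.norm_conj, pow_two]
  exact mul_dvd_mul_left _ hz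

lemma dvd_star_iff_norm_dvd_im_mul {π z : ℤ√d} (hπ : π.norm ≠ 0) (hz : π.norm ∣ z.norm) :
    π ∣ star z ↔ π.norm ∣ (π * z).im := by
  rw [dvd_iff_norm_dvd_im_star_mul hπ (by rwa [Zsqrtd.norm_conj]), ← star_mul, Zsqrtd.im_star,
    dvd_neg, mul_comm]

lemma dvd_xor_dvd_star_of_prime {p c a b : ℤ} (hp : Prime p) (hc : c ≠ 0) {n : ℕ} (hn : n ≠ 0)
    {π z : ℤ√d} (hπ : π.norm = c * p ^ n) (hz : π.norm ∣ z.norm) (ha : (star π * z).im = c * a)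
    (hb : (π * z).im = c * b) (hab : p ^ n ∣ a * b) (hsum : ¬ p ∣ a + b) :
    Xor (π ∣ z) (π ∣ star z) := by
  have hπ0 : π.norm ≠ 0 := hπ ▸ mul_ne_zero hc (pow_ne_zero n hp.ne_zero)
  rw [dvd_iff_norm_dvd_im_star_mul hπ0 hz, dvd_star_iff_norm_dvd_im_mul hπ0 hz, ha, hb, hπ,
    mul_dvd_mul_iff_left hc, mul_dvd_mul_iff_left hc]
  exact pow_dvd_xor_pow_dvd_of_prime hp hn hab hsum

lemma finite_setOf_norm_eq (hd : d < 0) (m : ℤ) : {z : ℤ√d | z.norm = m}.Finite := by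
  refine .of_finite_image (f := fun z : ℤ√d => (z.re, z.im))
    (((Set.finite_Icc (-m) m).prod (Set.finite_Icc (-m) m)).subset ?_)
    fun z _ w _ h => Zsqrtd.ext (congrArg Prod.fst h) (congrArg Prod.snd h)
  rintro _ ⟨z, rfl, rfl⟩
  have hN : z.norm = z.re ^ 2 + -d * z.im ^ 2 := by rw [Zsqrtd.norm_def]; ring
  rw [Set.mem_prod, Set.mem_Icc, Set.mem_Icc, ← abs_le, ← abs_le]
  constructor <;>
    nlinarith [sq_nonneg z.re, sq_nonneg z.im, Int.natAbs_le_self_sq z.re,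
      Int.natAbs_le_self_sq z.im, Int.natCast_natAbs z.re, Int.natCast_natAbs z.im]

/-- The elements of `C` with positive real part: representatives of `C` modulo sign when no element
of `C` has real part zero. -/
def posRe (C : Set (ℤ√d)) : Set (ℤ√d) :=
  {z ∈ C | 0 < z.re}

/-- The pairs `(x, y)` of natural numbers with `x + y√d ∈ C`. -/
def natPoints (C : Set (ℤ√d)) : Set (ℕ × ℕ) :=
  {q | (⟨q.1, q.2⟩ : ℤ√d) ∈ C}

lemma ncard_eq_two_mul_ncard_posRe {C : Set (ℤ√d)} (hfin : C.Finite)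
    (hneg : ∀ z ∈ C, -z ∈ C) (hre : ∀ z ∈ C, z.re ≠ 0) : C.ncard = 2 * (posRe C).ncard := by
  have hunion : C = posRe C ∪ Neg.neg '' posRe C := by
    ext z
    have hz : -z ∈ C ↔ z ∈ C := ⟨fun h => neg_neg z ▸ hneg _ h, hneg z⟩
    simp only [posRe, Set.image_neg_eq_neg, Set.mem_union, Set.mem_neg, Set.mem_ofPred_eq,
      Zsqrtd.re_neg, hz]
    grind
  have hdisj : Disjoint (posRe C) (Neg.neg '' posRe C) := by
    rw [Set.disjoint_left]
    simp only [posRe, Set.image_neg_eq_neg, Set.mem_neg, Set.mem_ofPred_eq, Zsqrtd.re_neg]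
    grind
  have hpos : (posRe C).Finite := hfin.subset fun z hz => hz.1
  conv_lhs => rw [hunion]
  rw [Set.ncard_union_eq hdisj hpos (hpos.image _), Set.ncard_image_of_injective _ neg_injective,
    two_mul]

lemma ncard_posRe_setOf_mul_mem {π : ℤ√d} (hπ : π.norm ≠ 0) {C : Set (ℤ√d)} (hfin : C.Finite)
    (hneg : ∀ z ∈ C, -z ∈ C) (hre : ∀ z ∈ C, z.re ≠ 0) (hre' : ∀ w, π * w ∈ C → w.re ≠ 0) :
    (posRe {w | π * w ∈ C}).ncard = (posRe {z ∈ C | π ∣ z}).ncard := by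
  have hinj : Function.Injective (π * ·) := fun _ _ => eq_of_mul_eq_mul_left_of_norm_ne_zero hπ
  have himage : (π * ·) '' {w | π * w ∈ C} = {z ∈ C | π ∣ z} := by
    ext z
    constructor
    · rintro ⟨w, hw, rfl⟩
      exact ⟨hw, dvd_mul_right π w⟩
    · rintro ⟨hz, w, rfl⟩
      exact ⟨w, hz, rfl⟩
  have hsource := ncard_eq_two_mul_ncard_posRe (C := {w | π * w ∈ C})
    (hfin.preimage hinj.injOn) (fun w hw => by simpa using hneg _ hw) hre'
  have htarget := ncard_eq_two_mul_ncard_posRe (C := {z ∈ C | π ∣ z})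
    (hfin.subset fun z hz => hz.1) (fun z hz => ⟨hneg z hz.1, hz.2.neg_right⟩)
    (fun z hz => hre z hz.1)
  rw [← himage, Set.ncard_image_of_injective _ hinj] at htarget
  rw [← himage]
  lia

lemma ncard_natPoints_eq_ncard_posRe {C D : Set (ℤ√d)} (hDC : D ⊆ C)
    (hstar : ∀ z ∈ C, star z ∈ C) (hre : ∀ z ∈ C, z.re ≠ 0)
    (hxor : ∀ z ∈ C, Xor (z ∈ D) (star z ∈ D)) : (natPoints C).ncard = (posRe D).ncard := by
  have hbij : Set.BijOn (fun z : ℤ√d => (z.re.natAbs, z.im.natAbs)) (posRe D) (natPoints C) := by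
    refine ⟨fun z ⟨hz, hpos⟩ => ?_, fun z ⟨hz, hzpos⟩ w ⟨hw, hwpos⟩ h => ?_, fun q hq => ?_⟩
    · change (⟨z.re.natAbs, z.im.natAbs⟩ : ℤ√d) ∈ C
      rw [Int.natAbs_of_nonneg hpos.le]
      rcases le_total 0 z.im with him | him
      · rw [Int.natAbs_of_nonneg him]
        exact hDC hz
      · rw [Int.ofNat_natAbs_of_nonpos him]
        exact hstar z (hDC hz)
    · obtain ⟨hre, him⟩ := Prod.ext_iff.1 h
      have hre : z.re = w.re := by lia
      rcases Int.natAbs_eq_natAbs_iff.1 him with him | him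
      · exact Zsqrtd.ext hre him
      · obtain rfl : z = star w := Zsqrtd.ext hre him
        exact absurd ⟨hw, hz⟩ (xor_iff_or_and_not_and _ _ |>.1 (hxor w (hDC hw))).2
    · have hpos : (0 : ℤ) < q.1 := lt_of_le_of_ne (Int.natCast_nonneg _) (hre _ hq).symm
      rcases (hxor _ hq).or with h | h
      · exact ⟨_, ⟨h, hpos⟩, by simp⟩
      · exact ⟨_, ⟨h, hpos⟩, by simp⟩
  exact hbij.ncard_eq.symm

lemma ncard_natPoints_eq_ncard_posRe_setOf_mul_mem {π : ℤ√d} (hπ : π.norm ≠ 0) {C : Set (ℤ√d)}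
    (hfin : C.Finite) (hneg : ∀ z ∈ C, -z ∈ C) (hstar : ∀ z ∈ C, star z ∈ C)
    (hre : ∀ z ∈ C, z.re ≠ 0) (hre' : ∀ w, π * w ∈ C → w.re ≠ 0)
    (hxor : ∀ z ∈ C, Xor (π ∣ z) (π ∣ star z)) :
    (natPoints C).ncard = (posRe {w | π * w ∈ C}).ncard := by
  rw [ncard_posRe_setOf_mul_mem hπ hfin hneg hre hre']
  refine ncard_natPoints_eq_ncard_posRe (fun z hz => hz.1) hstar hre fun z hz => ?_
  simpa only [Set.mem_ofPred_eq, hz, hstar z hz, true_and] using hxor z hz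

lemma odd_ncard_iff_of_star_mem {S : Set (ℤ√d)} (hfin : S.Finite) (hstar : ∀ z ∈ S, star z ∈ S) :
    Odd S.ncard ↔ Odd {z ∈ S | z.im = 0}.ncard := by
  have hmoved : Even {z ∈ S | z.im ≠ 0}.ncard := by
    rw [Set.ncard_eq_toFinset_card _ (hfin.subset fun z hz => hz.1),
      ← ZMod.natCast_eq_zero_iff_even, Finset.cast_card]
    refine Finset.sum_involution (fun z _ => star z) (fun _ _ => by decide) (fun z hz _ h => ?_)
      (fun z hz => ?_) (fun z _ => star_star z)
    · have := congrArg Zsqrtd.im h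
      simp only [ne_eq, Set.Finite.mem_toFinset, Set.mem_ofPred_eq, Zsqrtd.im_star] at this hz
      lia
    · simp only [ne_eq, Set.Finite.mem_toFinset, Set.mem_ofPred_eq, Zsqrtd.im_star,
        neg_eq_zero] at hz ⊢
      exact ⟨hstar z hz.1, hz.2⟩
  have hunion : S = {z ∈ S | z.im = 0} ∪ {z ∈ S | z.im ≠ 0} := by
    ext z
    simp only [Set.mem_union, Set.mem_ofPred_eq]
    tauto
  have hdisj : Disjoint {z ∈ S | z.im = 0} {z ∈ S | z.im ≠ 0} :=
    Set.disjoint_left.2 fun z hz hz' => hz'.2 hz.2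
  conv_lhs => rw [hunion]
  rw [Set.ncard_union_eq hdisj (hfin.subset fun z hz => hz.1) (hfin.subset fun z hz => hz.1),
    Nat.odd_add, iff_true_right hmoved]

lemma odd_ncard_posRe_norm_eq_iff (hd : d < 0) {m : ℤ} (hm : m ≠ 0) :
    Odd (posRe {z : ℤ√d | z.norm = m}).ncard ↔ IsSquare m := by
  rw [odd_ncard_iff_of_star_mem (S := posRe {z : ℤ√d | z.norm = m})
    ((finite_setOf_norm_eq hd m).subset fun z hz => hz.1)
    fun z hz => ⟨(Zsqrtd.norm_conj z).trans hz.1, hz.2⟩]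
  have hnorm {z : ℤ√d} (hz : z.im = 0) : z.norm = z.re * z.re := by simp [Zsqrtd.norm_def, hz]
  by_cases h : IsSquare m
  · obtain ⟨a, ha, rfl⟩ : ∃ a, 0 < a ∧ m = a * a := by
      obtain ⟨a, rfl⟩ := h
      exact ⟨|a|, abs_pos.2 (mul_self_ne_zero.1 hm), (abs_mul_abs_self a).symm⟩
    have hsingle : {z ∈ posRe {z : ℤ√d | z.norm = a * a} | z.im = 0} = {⟨a, 0⟩} := by
      ext z
      constructor
      · rintro ⟨⟨hz, hpos⟩, him⟩
        rw [Set.mem_ofPred_eq, hnorm him] at hz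
        exact Zsqrtd.ext (by nlinarith) him
      · rintro rfl
        exact ⟨⟨hnorm rfl, ha⟩, rfl⟩
    simp [hsingle]
  · have hempty : {z ∈ posRe {z : ℤ√d | z.norm = m} | z.im = 0} = ∅ :=
      Set.eq_empty_of_forall_notMem fun z hz => h ⟨z.re, hz.1.1.symm.trans (hnorm hz.2)⟩
    simp [hempty, h]

end HalfPlane

section Representations

lemma re_ne_zero_of_odd_norm {d : ℤ} (hd : Even d) {z : ℤ√d} (hz : Odd z.norm) : z.re ≠ 0 := by
  intro h
  rw [Zsqrtd.norm_def, h, zero_mul, zero_sub, mul_assoc] at hz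
  exact Int.not_even_iff_odd.2 hz (hd.mul_right _).neg

lemma odd_ncard_posRe_norm_eq_dvd_iff {d : ℤ} (hd : d < 0) {m : ℤ} (hm : m ≠ 0) {π : ℤ√d}
    (hπ : π.norm ≠ 0) (hre : ∀ z : ℤ√d, z.norm = m → z.re ≠ 0)
    (hre' : ∀ w : ℤ√d, π.norm * w.norm = m → w.re ≠ 0) :
    Odd (posRe {z : ℤ√d | z.norm = m ∧ π ∣ z}).ncard ↔ ∃ n, m = π.norm * n ∧ IsSquare n := by
  have hcard := ncard_posRe_setOf_mul_mem hπ (finite_setOf_norm_eq hd m)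
    (fun z hz => (Zsqrtd.norm_neg z).trans hz) hre
    (fun w hw => hre' w ((Zsqrtd.norm_mul π w).symm.trans hw))
  change _ = (posRe {z : ℤ√d | z.norm = m ∧ π ∣ z}).ncard at hcard
  rw [← hcard]
  simp only [Set.mem_ofPred_eq, Zsqrtd.norm_mul]
  by_cases h : π.norm ∣ m
  · obtain ⟨n, rfl⟩ := h
    simp only [mul_right_inj' hπ, exists_eq_left']
    exact odd_ncard_posRe_norm_eq_iff hd (right_ne_zero_of_mul hm)
  · have hw (w : ℤ√d) : π.norm * w.norm ≠ m := fun hw => h ⟨_, hw.symm⟩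
    have hn (n : ℤ) : m ≠ π.norm * n := fun hn => h ⟨_, hn⟩
    simp [hw, hn, posRe]

lemma odd_ncard_posRe_norm_eq_not_dvd_iff {d : ℤ} (hd : d < 0) {m : ℤ} (hm : m ≠ 0) {π : ℤ√d}
    (hπ : π.norm ≠ 0) (hre : ∀ z : ℤ√d, z.norm = m → z.re ≠ 0)
    (hre' : ∀ w : ℤ√d, π.norm * w.norm = m → w.re ≠ 0) :
    Odd (posRe {z : ℤ√d | z.norm = m ∧ ¬ π ∣ z}).ncard ↔
      Xor (IsSquare m) (∃ n, m = π.norm * n ∧ IsSquare n) := by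
  have hfin : (posRe {z : ℤ√d | z.norm = m}).Finite :=
    (finite_setOf_norm_eq hd m).subset fun _ hz => hz.1
  have hsub : posRe {z : ℤ√d | z.norm = m ∧ π ∣ z} ⊆ posRe {z : ℤ√d | z.norm = m} :=
    fun z hz => ⟨hz.1.1, hz.2⟩
  have hdiff : posRe {z : ℤ√d | z.norm = m ∧ ¬ π ∣ z} =
      posRe {z | z.norm = m} \ posRe {z | z.norm = m ∧ π ∣ z} := by
    ext z
    simp only [posRe, Set.mem_sdiff, Set.mem_ofPred_eq]
    tauto
  rw [hdiff, Set.ncard_sdiff hsub (hfin.subset hsub), Nat.odd_sub (Set.ncard_le_ncard hsub hfin),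
    odd_ncard_posRe_norm_eq_iff hd hm, ← Nat.not_odd_iff_even,
    odd_ncard_posRe_norm_eq_dvd_iff hd hm hπ hre hre', xor_iff_iff_not]

lemma ncard_natPoints_norm_eq_and {d : ℤ} (hd : d < 0) {π : ℤ√d} (hπ : π.norm ≠ 0) {n : ℤ}
    {P : ℤ√d → Prop} (hneg : ∀ z, P z → P (-z)) (hstar : ∀ z, P z → P (star z))
    (hre : ∀ z, z.norm = n → P z → z.re ≠ 0)
    (hre' : ∀ w, (π * w).norm = n → P (π * w) → w.re ≠ 0)
    (hxor : ∀ z, z.norm = n → P z → Xor (π ∣ z) (π ∣ star z)) :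
    (natPoints {z : ℤ√d | z.norm = n ∧ P z}).ncard =
      (posRe {w : ℤ√d | (π * w).norm = n ∧ P (π * w)}).ncard :=
  ncard_natPoints_eq_ncard_posRe_setOf_mul_mem hπ
    ((finite_setOf_norm_eq hd n).subset fun _ hz => hz.1)
    (fun z hz => ⟨(Zsqrtd.norm_neg z).trans hz.1, hneg z hz.2⟩)
    (fun z hz => ⟨(Zsqrtd.norm_conj z).trans hz.1, hstar z hz.2⟩)
    (fun z hz => hre z hz.1 hz.2) (fun w hw => hre' w hw.1 hw.2) (fun z hz => hxor z hz.1 hz.2)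

lemma dvd_xor_dvd_star_of_norm_eq_three_mul {m : ℤ} {z : ℤ√(-2)} (hz : z.norm = 3 * m)
    (h3 : ¬ 3 ∣ z.re) : Xor (⟨1, 1⟩ ∣ z) (⟨1, 1⟩ ∣ star z) := by
  have hmul : (z.im - z.re) * (z.im + z.re) = 3 * (z.im ^ 2 - m) := by
    rw [Zsqrtd.norm_def] at hz
    linear_combination -hz
  refine dvd_xor_dvd_star_of_prime (a := z.im - z.re) (b := z.im + z.re) Int.prime_three
    one_ne_zero one_ne_zero rfl ⟨m, hz⟩ (by simp only [Zsqrtd.star_mk, Zsqrtd.im_mul]; ring)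
    (by simp) ⟨_, hmul⟩ fun h => h3 ?_
  have him : 3 ∣ z.im := by lia
  rcases Int.prime_three.dvd_or_dvd ⟨_, hmul⟩ with h | h <;> lia

lemma odd_ncard_natPoints_norm_eq_three_mul_iff {m : ℤ} (hm : Odd m) :
    Odd (natPoints {z : ℤ√(-2) | z.norm = 3 * m ∧ ¬ 3 ∣ z.re}).ncard ↔
      Xor (IsSquare m) (∃ n, m = 3 * n ∧ IsSquare n) := by
  have hm0 : m ≠ 0 := by rintro rfl; exact absurd hm (by decide)
  have hre {w : ℤ√(-2)} : Odd w.norm → w.re ≠ 0 := re_ne_zero_of_odd_norm (by decide)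
  have hnorm (w : ℤ√(-2)) : ((⟨1, 1⟩ : ℤ√(-2)) * w).norm = 3 * w.norm := Zsqrtd.norm_mul _ _
  have hset : {w : ℤ√(-2) | ((⟨1, 1⟩ : ℤ√(-2)) * w).norm = 3 * m ∧
      ¬ 3 ∣ ((⟨1, 1⟩ : ℤ√(-2)) * w).re} = {w | w.norm = m ∧ ¬ ⟨1, -1⟩ ∣ w} := by
    ext w
    have hdvd : (⟨1, -1⟩ : ℤ√(-2)) ∣ w ↔ 3 ∣ ((⟨1, 1⟩ : ℤ√(-2)) * w).re := by
      rw [dvd_iff_norm_dvd_star_mul (by decide), Zsqrtd.intCast_dvd]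
      simp only [Zsqrtd.norm_def, Zsqrtd.star_mk, Zsqrtd.re_mul, Zsqrtd.im_mul]
      lia
    simp only [Set.mem_ofPred_eq, hdvd, hnorm]
    lia
  rw [ncard_natPoints_norm_eq_and (by decide) (π := ⟨1, 1⟩) (by decide) (by simp) (by simp) ?_ ?_
    (fun _ => dvd_xor_dvd_star_of_norm_eq_three_mul), hset,
    odd_ncard_posRe_norm_eq_not_dvd_iff (by decide) hm0 (by decide) ?_ ?_]
  · rfl
  · exact fun z hz => hre (hz ▸ hm)
  · exact fun w hw => hre (Int.odd_mul.1 (hw ▸ hm : Odd (_ * w.norm))).2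
  · rintro z - h3 h0
    exact h3 (h0 ▸ dvd_zero 3)
  · exact fun w hw _ => hre (mul_left_cancel₀ three_ne_zero ((hnorm w).symm.trans hw) ▸ hm)

lemma dvd_xor_dvd_star_of_norm_eq_two_pow_mul {d r : ℤ} (hr : Odd r) {n : ℕ} (hn : n ≠ 0)
    (hπ : (⟨r, 1⟩ : ℤ√d).norm = 2 * 2 ^ n) {m : ℤ} (hm : Odd m) {z : ℤ√d}
    (hz : z.norm = 2 * 2 ^ n * m) (hodd : Odd z.re ∧ Odd z.im) :
    Xor (⟨r, 1⟩ ∣ z) (⟨r, 1⟩ ∣ star z) := by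
  have hr2 : r ^ 2 - d = 2 * 2 ^ n := by
    rw [← hπ, Zsqrtd.norm_def]
    ring
  obtain ⟨a, ha⟩ := (hr.mul hodd.2).sub_odd hodd.1
  obtain ⟨b, hb⟩ := (hr.mul hodd.2).add_odd hodd.1
  refine dvd_xor_dvd_star_of_prime (a := a) (b := b) Int.prime_two two_ne_zero hn hπ
    (hπ ▸ ⟨m, hz⟩) (by simp only [Zsqrtd.star_mk, Zsqrtd.im_mul]; lia)
    (by simp only [Zsqrtd.im_mul]; lia) ?_ fun h => ?_
  · obtain ⟨k, hk⟩ : Even (z.im ^ 2 - m) := hodd.2.pow.sub_odd hm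
    refine ⟨k, ?_⟩
    rw [Zsqrtd.norm_def] at hz
    refine mul_left_cancel₀ four_ne_zero ?_
    linear_combination -(2 * a) * hb - (r * z.im + z.re) * ha + z.im ^ 2 * hr2 - hz +
      2 * 2 ^ n * hk
  · rw [show a + b = r * z.im by lia] at h
    exact Int.not_even_iff_odd.2 (hr.mul hodd.2) (even_iff_two_dvd.2 h)

lemma odd_ncard_natPoints_norm_eq_two_pow_mul_iff {d : ℤ} (hd : d < 0) {r : ℤ} (hr : Odd r) {n : ℕ}
    (hn : n ≠ 0) (hπ : (⟨r, 1⟩ : ℤ√d).norm = 2 * 2 ^ n) {m : ℤ} (hm : Odd m)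
    (hre : ∀ w : ℤ√d, w.norm = m → w.re ≠ 0) :
    Odd (natPoints {z : ℤ√d | z.norm = 2 * 2 ^ n * m ∧ Odd z.re ∧ Odd z.im}).ncard ↔
      IsSquare m := by
  have hm0 : m ≠ 0 := by rintro rfl; exact absurd hm (by decide)
  have hπ0 : (⟨r, 1⟩ : ℤ√d).norm ≠ 0 := hπ ▸ by positivity
  have hset : {w : ℤ√d | ((⟨r, 1⟩ : ℤ√d) * w).norm = 2 * 2 ^ n * m ∧
      Odd ((⟨r, 1⟩ : ℤ√d) * w).re ∧ Odd ((⟨r, 1⟩ : ℤ√d) * w).im} = {w | w.norm = m} := by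
    ext w
    simp only [Set.mem_ofPred_eq, Zsqrtd.norm_mul, hπ, mul_right_inj' (hπ ▸ hπ0)]
    refine and_iff_left_of_imp fun hw => ?_
    have hd : Odd d := by
      rw [show d = r ^ 2 - 2 * 2 ^ n by rw [← hπ, Zsqrtd.norm_def]; ring]
      exact hr.pow.sub_even (even_two.mul_right _)
    rw [← hw] at hm
    simp only [Zsqrtd.norm_def, Zsqrtd.re_mul, Zsqrtd.im_mul, Int.odd_sub, Int.odd_add,
      Int.odd_mul, ← Int.not_odd_iff_even, hr, hd] at hm ⊢
    tauto
  rw [ncard_natPoints_norm_eq_and hd hπ0 (by simp) (by simp) ?_ ?_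
    (fun _ => dvd_xor_dvd_star_of_norm_eq_two_pow_mul hr hn hπ hm), hset,
    odd_ncard_posRe_norm_eq_iff hd hm0]
  · rintro z - hodd h0
    rw [h0] at hodd
    exact absurd hodd.1 (by decide)
  · intro w hw _
    rw [Zsqrtd.norm_mul, hπ] at hw
    exact hre w (mul_left_cancel₀ (hπ ▸ hπ0) hw)

lemma ncard_natPoints_norm_eq_thirtyThree_mul {m : ℤ} (hm : Odd m) (h11 : ¬ 11 ∣ m) :
    (natPoints {z : ℤ√(-24) | z.norm = 33 * m ∧ ¬ 9 ∣ z.re}).ncard =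
      (posRe {w : ℤ√(-24) | w.norm = m ∧ ¬ 3 ∣ w.re + w.im}).ncard := by
  have hp11 : Prime (11 : ℤ) := Int.prime_ofNat_iff.2 (by norm_num)
  have hxor (z : ℤ√(-24)) (hz : z.norm = 33 * m) : Xor (⟨3, 1⟩ ∣ z) (⟨3, 1⟩ ∣ star z) := by
    have hN : z.re ^ 2 + 24 * z.im ^ 2 = 33 * m := by
      rw [← hz, Zsqrtd.norm_def]
      ring
    obtain ⟨y, hy⟩ : 3 ∣ z.re := Int.prime_three.dvd_of_dvd_pow (n := 2) (by lia)
    have hmul : 8 * ((z.im - y) * (z.im + y)) = 11 * (m - y ^ 2) := by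
      rw [hy] at hN
      linarith
    have hdvd : 11 ∣ (z.im - y) * (z.im + y) := by lia
    refine dvd_xor_dvd_star_of_prime (a := z.im - y) (b := z.im + y) (n := 1) hp11 three_ne_zero
      one_ne_zero rfl ⟨m, hz⟩ (by simp only [Zsqrtd.star_mk, Zsqrtd.im_mul]; lia)
      (by simp only [Zsqrtd.im_mul]; lia) (by rwa [pow_one]) fun hsum => h11 ?_
    obtain ⟨k, hk⟩ : 11 ∣ z.im := by lia
    obtain ⟨l, rfl⟩ : 11 ∣ y := by rcases hp11.dvd_or_dvd hdvd with h | h <;> lia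
    exact ⟨8 * k ^ 2 + 3 * l ^ 2, by rw [hy, hk] at hN; lia⟩
  have hset : {w : ℤ√(-24) | ((⟨3, 1⟩ : ℤ√(-24)) * w).norm = 33 * m ∧
      ¬ 9 ∣ ((⟨3, 1⟩ : ℤ√(-24)) * w).re} = {w | w.norm = m ∧ ¬ 3 ∣ w.re + w.im} := by
    ext w
    have hnorm : ((⟨3, 1⟩ : ℤ√(-24)) * w).norm = 33 * w.norm := Zsqrtd.norm_mul _ _
    simp only [Set.mem_ofPred_eq, hnorm, Zsqrtd.re_mul]
    lia
  rw [ncard_natPoints_norm_eq_and (by decide) (π := ⟨3, 1⟩) (by decide) (by simp) (by simp) ?_ ?_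
    fun z hz _ => hxor z hz, hset]
  · rintro z - h9 h0
    exact h9 (h0 ▸ dvd_zero 9)
  · intro w hw _
    rw [Zsqrtd.norm_mul] at hw
    exact re_ne_zero_of_odd_norm (by decide) (mul_left_cancel₀ (by decide) hw ▸ hm)

end Representations

section Partitions

open PowerSeries PowerSeries.WithPiTopology

lemma continuous_expand {R : Type*} [CommRing R] [TopologicalSpace R] {m : ℕ} (hm : m ≠ 0) :
    Continuous (expand m hm : R⟦X⟧ → R⟦X⟧) := by
  refine continuous_iff_continuousAt.2 fun F => (tendsto_iff_coeff_tendsto _ _ _ _).2 fun n => ?_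
  simp only [coeff_expand]
  split_ifs
  · exact (continuous_coeff R (n / m)).continuousAt
  · exact tendsto_const_nhds

lemma mk_card_countRestricted_mul_pentagonalSeries (R : Type*) [CommRing R] {m : ℕ} (hm : m ≠ 0) :
    (mk fun n => ((Nat.Partition.countRestricted n m).card : R)) * pentagonalSeries R =
      expand m hm (pentagonalSeries R) := by
  let _ : TopologicalSpace R := ⊥
  have _ : DiscreteTopology R := ⟨rfl⟩
  have hprod := (Nat.Partition.hasProd_powerSeriesMk_card_countRestricted R
    (Nat.pos_of_ne_zero hm)).mul (hasProd_one_sub_X_pow R)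
  have hfactor (b : ℕ) : (∑ j ∈ Finset.range m, (X : R⟦X⟧) ^ ((b + 1) * j)) * (1 - X ^ (b + 1)) =
      expand m hm (1 - X ^ (b + 1)) := by
    simp only [pow_mul, geom_sum_mul_neg, map_sub, map_one, map_pow, expand_X, pow_right_comm X m]
  rw [funext hfactor] at hprod
  exact hprod.unique ((hasProd_one_sub_X_pow R).map (expand m hm) (continuous_expand hm))

lemma isSquare_twentyFour_mul_add_one_iff (n : ℕ) :
    IsSquare (24 * n + 1) ↔ n ∈ Set.range pentagonal := by
  constructor
  · rintro ⟨r, hr⟩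
    obtain ⟨k, hk⟩ : ∃ k : ℤ, (r : ℤ) = 6 * k - 1 ∨ (r : ℤ) = -(6 * k - 1) := by
      have : r * r % 6 = 1 := by lia
      have : r % 6 = 1 ∨ r % 6 = 5 := by
        rw [Nat.mul_mod] at this
        have := Nat.mod_lt r (show 0 < 6 by lia)
        interval_cases r % 6 <;> lia
      rcases this with h | h
      · exact ⟨-(r / 6 : ℕ), by lia⟩
      · exact ⟨(r / 6 : ℕ) + 1, by lia⟩
    refine ⟨k, ?_⟩
    have hsq : (r : ℤ) * r = (6 * k - 1) * (6 * k - 1) := by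
      rcases hk with hk | hk <;> rw [hk]
      ring
    have := two_mul_natCast_pentagonal k
    zify at hr ⊢
    linarith
  · rintro ⟨k, rfl⟩
    refine Int.isSquare_natCast_iff.1 ⟨6 * k - 1, ?_⟩
    push_cast
    linear_combination 12 * two_mul_natCast_pentagonal k

end Partitions

section Theta

open PowerSeries

/-- The series `∑ X ^ n` over `ZMod 2`, summed over the `n` for which `a * n + 1` is a perfect
square. For `a = 24` it is the Euler product `∏ (1 - X ^ n)` modulo `2`. -/
noncomputable def theta (a : ℕ) : (ZMod 2)⟦X⟧ :=
  mk fun n => if IsSquare (a * n + 1) then 1 else 0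

lemma coeff_theta_eq_one_iff (a n : ℕ) : coeff n (theta a) = 1 ↔ IsSquare (a * n + 1) := by
  rw [theta, coeff_mk]
  split_ifs with h <;> simp [h]

lemma coeff_expand_theta_eq_one_iff (a : ℕ) {k : ℕ} (hk : k ≠ 0) (n : ℕ) :
    coeff n (expand k hk (theta a)) = 1 ↔ ∃ j, n = k * j ∧ IsSquare (a * j + 1) := by
  by_cases h : k ∣ n
  · obtain ⟨j, rfl⟩ := h
    simp [coeff_expand_mul, coeff_theta_eq_one_iff, hk]
  · rw [coeff_expand_of_not_dvd _ _ _ h]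
    simp only [zero_ne_one, false_iff]
    rintro ⟨j, rfl, -⟩
    exact h (dvd_mul_right k j)

lemma ext_of_coeff_eq_one_iff {F G : (ZMod 2)⟦X⟧} (h : ∀ n, coeff n F = 1 ↔ coeff n G = 1) :
    F = G := by
  have hbit : ∀ s t : ZMod 2, (s = 1 ↔ t = 1) → s = t := by decide
  exact PowerSeries.ext fun n => hbit _ _ (h n)

lemma theta_twentyFour : theta 24 = pentagonalSeries (ZMod 2) := by
  ext n
  rw [theta, coeff_mk]
  split_ifs with h <;> rw [isSquare_twentyFour_mul_add_one_iff] at h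
  · obtain ⟨k, rfl⟩ := h
    rw [coeff_pentagonalSeries_pentagonal]
    rcases Int.units_eq_one_or k.negOnePow with h | h <;> rw [h] <;> rfl
  · rw [coeff_pentagonalSeries_eq_zero _ h]

lemma mk_b21_mul_theta :
    (mk fun n => (b21 n : ZMod 2)) * theta 24 = expand 21 (by norm_num) (theta 24) := by
  rw [theta_twentyFour, ← mk_card_countRestricted_mul_pentagonalSeries]
  congr! 3 with n
  exact congrArg _ (Nat.Partition.card_restricted_eq_card_countRestricted n (by norm_num))

lemma sq_eq_expand_two (F : (ZMod 2)⟦X⟧) : F ^ 2 = expand 2 two_ne_zero F := by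
  have h := MvPowerSeries.map_frobenius_expand (σ := Unit) 2 two_ne_zero (f := F)
  rw [ZMod.frobenius_zmod, MvPowerSeries.map_id] at h
  exact h.symm

lemma coeff_theta_mul_expand_theta_eq_one_iff {a b k : ℕ} (ha : a ≠ 0) (hk : k ≠ 0)
    (n : ℕ) : coeff n (theta a * expand k hk (theta b)) = 1 ↔
      Odd {q : ℕ × ℕ | ∃ i j, i + k * j = n ∧ q.1 ^ 2 = a * i + 1 ∧ q.2 ^ 2 = b * j + 1}.ncard := by
  classical
  have hmul : ∀ s t : ZMod 2, s * t = if s = 1 ∧ t = 1 then 1 else 0 := by decide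
  simp only [coeff_mul, hmul, Finset.sum_boole, ZMod.natCast_eq_one_iff_odd,
    coeff_theta_eq_one_iff, coeff_expand_theta_eq_one_iff, ← Set.ncard_coe_finset]
  refine Eq.to_iff (congrArg Odd (Set.BijOn.ncard_eq
    (f := fun c : ℕ × ℕ => ((a * c.1 + 1).sqrt, (b * (c.2 / k) + 1).sqrt)) ⟨?_, ?_, ?_⟩))
  · rintro ⟨i, _⟩ h
    simp only [Finset.coe_filter, Finset.HasAntidiagonal.mem_antidiagonal,
      Set.mem_ofPred_eq] at h
    obtain ⟨hn, ⟨x, hx⟩, j, rfl, y, hy⟩ := h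
    simp only [Set.mem_ofPred_eq, Nat.mul_div_cancel_left _ (Nat.pos_of_ne_zero hk)]
    exact ⟨i, j, hn, by rw [hx, Nat.sqrt_eq, pow_two], by rw [hy, Nat.sqrt_eq, pow_two]⟩
  · rintro ⟨i, _⟩ h ⟨i', _⟩ h' heq
    simp only [Finset.coe_filter, Finset.HasAntidiagonal.mem_antidiagonal,
      Set.mem_ofPred_eq] at h h'
    obtain ⟨hn, ⟨x, hx⟩, -⟩ := h
    obtain ⟨hn', ⟨x', hx'⟩, -⟩ := h'
    have hxx : x = x' := by simpa only [hx, hx', Nat.sqrt_eq] using congrArg Prod.fst heq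
    have hii : i = i' := Nat.eq_of_mul_eq_mul_left (Nat.pos_of_ne_zero ha) (by lia)
    ext <;> simp only <;> lia
  · rintro ⟨x, y⟩ ⟨i, j, hn, hx, hy⟩
    refine ⟨(i, k * j), ?_, ?_⟩
    · simp only [Finset.coe_filter, Finset.HasAntidiagonal.mem_antidiagonal, Set.mem_ofPred_eq]
      exact ⟨hn, ⟨x, by rw [← hx, pow_two]⟩, j, rfl, y, by rw [← hy, pow_two]⟩
    · simp only [Nat.mul_div_cancel_left _ (Nat.pos_of_ne_zero hk)]
      rw [← hx, ← hy, Nat.sqrt_eq', Nat.sqrt_eq']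

end Theta

section Dissection

open PowerSeries

variable {R : Type*} [CommRing R]

/-- The `r`-th component of the `m`-dissection of a power series: the series `∑ a (m * n + r) X ^ n`
extracted from `∑ a n X ^ n`. -/
noncomputable def dissection (m r : ℕ) : R⟦X⟧ →ₗ[R] R⟦X⟧ where
  toFun F := mk fun n => coeff (m * n + r) F
  map_add' F G := by ext n; simp only [coeff_mk, map_add]
  map_smul' c F := by ext n; simp only [coeff_mk, map_smul, RingHom.id_apply]

@[simp]
lemma coeff_dissection (m r n : ℕ) (F : R⟦X⟧) :
    coeff n (dissection m r F) = coeff (m * n + r) F :=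
  coeff_mk n fun n => coeff (m * n + r) F

lemma dissection_succ_X_mul (m r : ℕ) (F : R⟦X⟧) :
    dissection m (r + 1) (X * F) = dissection m r F := by
  ext n
  rw [coeff_dissection, coeff_dissection, ← add_assoc, coeff_succ_X_mul]

lemma dissection_mul_expand {m r : ℕ} (hm : m ≠ 0) (hr : r < m) (F G : R⟦X⟧) :
    dissection m r (F * expand m hm G) = dissection m r F * G := by
  ext n
  rw [coeff_dissection, coeff_mul, coeff_mul]
  symm
  refine Finset.sum_of_injOn (fun q => (m * q.1 + r, m * q.2)) ?_ ?_ ?_ ?_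
  · rintro ⟨a, b⟩ _ ⟨c, d⟩ _ h
    simpa [hm] using h
  · rintro ⟨a, b⟩ h
    simp only [Finset.mem_coe, Finset.HasAntidiagonal.mem_antidiagonal] at h ⊢
    rw [← h]
    ring
  · rintro ⟨i, j⟩ hij hout
    rw [Finset.HasAntidiagonal.mem_antidiagonal] at hij
    rw [coeff_expand_of_not_dvd, mul_zero]
    rintro ⟨b, rfl⟩
    have hb : b ≤ n := by
      by_contra! h
      have := Nat.mul_le_mul_left m h
      lia
    obtain ⟨a, rfl⟩ := Nat.exists_eq_add_of_le' hb
    exact hout ⟨(a, b), by simp, Prod.ext (by simp only; lia) rfl⟩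
  · rintro ⟨a, b⟩ _
    rw [coeff_dissection, coeff_expand_mul]

lemma sum_X_pow_mul_expand_dissection {m : ℕ} (hm : m ≠ 0) (F : R⟦X⟧) :
    ∑ r ∈ Finset.range m, X ^ r * expand m hm (dissection m r F) = F := by
  ext n
  obtain ⟨q, r, hr, rfl⟩ : ∃ q r, r < m ∧ n = m * q + r :=
    ⟨n / m, n % m, Nat.mod_lt n (Nat.pos_of_ne_zero hm), (Nat.div_add_mod n m).symm⟩
  rw [map_sum, Finset.sum_eq_single r]
  · rw [coeff_X_pow_mul, coeff_expand_mul, coeff_dissection]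
  · intro s hs hsr
    rw [coeff_X_pow_mul']
    split_ifs with hle
    · refine coeff_expand_of_not_dvd m hm _ fun ⟨c, hc⟩ => hsr ?_
      have hmod : (m * c + s) % m = (m * q + r) % m := by rw [← hc, Nat.sub_add_cancel hle]
      rwa [Nat.mul_add_mod, Nat.mul_add_mod, Nat.mod_eq_of_lt hr,
        Nat.mod_eq_of_lt (Finset.mem_range.1 hs)] at hmod
    · rfl
  · exact fun h => absurd (Finset.mem_range.2 hr) h

lemma dvd_mul_add_iff_exists_eq_mul_add {m k r s e : ℕ} (hk : k ≠ 0)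
    (hmk : m.Coprime k) (hs : s < m) (h : k * s = m * e + r) (n : ℕ) :
    k ∣ m * n + r ↔ ∃ t, n = k * t + e := by
  constructor
  · rintro ⟨c, hc⟩
    have hdvd : (k : ℤ) ∣ m * (n - e) := ⟨c - s, by zify at hc h; linear_combination hc + h⟩
    obtain ⟨t, ht⟩ := (Nat.isCoprime_iff_coprime.2 hmk.symm).dvd_of_dvd_mul_left hdvd
    have he : e < k := by
      have := Nat.mul_lt_mul_of_pos_left hs (Nat.pos_of_ne_zero hk)
      exact Nat.lt_of_mul_lt_mul_left (a := m) (by lia)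
    have ht0 : 0 ≤ t := by
      by_contra! hneg
      have := mul_le_mul_of_nonneg_left (show t ≤ -1 by lia) (Int.natCast_nonneg k)
      lia
    lift t to ℕ using ht0
    exact ⟨t, by lia⟩
  · rintro ⟨t, rfl⟩
    exact ⟨m * t + s, by lia⟩

lemma dissection_expand {m k r s e : ℕ} (hk : k ≠ 0) (hmk : m.Coprime k) (hs : s < m)
    (h : k * s = m * e + r) (F : R⟦X⟧) :
    dissection m r (expand k hk F) = X ^ e * expand k hk (dissection m s F) := by
  ext n
  have hdvd := dvd_mul_add_iff_exists_eq_mul_add hk hmk hs h n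
  rw [coeff_dissection, coeff_X_pow_mul']
  by_cases hn : ∃ t, n = k * t + e
  · obtain ⟨t, rfl⟩ := hn
    rw [if_pos (Nat.le_add_left _ _), Nat.add_sub_cancel, coeff_expand_mul, coeff_dissection,
      ← coeff_expand_mul k hk F]
    congr 2
    lia
  · rw [coeff_expand_of_not_dvd k hk F (hdvd.not.2 hn)]
    split_ifs with hle
    · exact (coeff_expand_of_not_dvd k hk _ fun ⟨t, ht⟩ => hn ⟨t, by lia⟩).symm
    · rfl

end Dissection

section ThetaProducts

open PowerSeries

lemma sq_emod_three (x : ℤ) : 3 ∣ x ∧ x ^ 2 % 3 = 0 ∨ ¬ 3 ∣ x ∧ x ^ 2 % 3 = 1 := by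
  have hmod : x ^ 2 % 3 = (x % 3) ^ 2 % 3 := by rw [pow_two, pow_two, Int.mul_emod]
  have hx : x % 3 = 0 ∨ x % 3 = 1 ∨ x % 3 = 2 := by lia
  rcases hx with hx | hx | hx <;> rw [hx] at hmod <;> lia

lemma sq_emod_eight (x : ℤ) :
    2 ∣ x ∧ (x ^ 2 % 8 = 0 ∨ x ^ 2 % 8 = 4) ∨ ¬ 2 ∣ x ∧ x ^ 2 % 8 = 1 := by
  rcases Int.even_or_odd' x with ⟨y, rfl | rfl⟩
  · have := Int.emod_two_eq (y ^ 2)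
    exact Or.inl ⟨dvd_mul_right 2 y, by lia⟩
  · have := Int.eight_dvd_sq_sub_one_of_odd ⟨y, rfl⟩
    exact Or.inr ⟨by lia, by lia⟩

lemma theta_twentyFour_mul_expand_two :
    theta 24 * expand 2 two_ne_zero (theta 24) = theta 8 := by
  refine ext_of_coeff_eq_one_iff fun n => ?_
  have hpts : {q : ℕ × ℕ | ∃ i j, i + 2 * j = n ∧ q.1 ^ 2 = 24 * i + 1 ∧ q.2 ^ 2 = 24 * j + 1} =
      natPoints {z : ℤ√(-2) | z.norm = 3 * (8 * n + 1 : ℤ) ∧ ¬ 3 ∣ z.re} := by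
    ext ⟨x, y⟩
    simp only [natPoints, Zsqrtd.norm_def, Set.mem_ofPred_eq]
    have := sq_emod_three x
    have := sq_emod_eight x
    have := sq_emod_three y
    have := sq_emod_eight y
    exact ⟨fun ⟨i, j, hn, hx, hy⟩ => by lia,
      fun h => ⟨x ^ 2 / 24, y ^ 2 / 24, by lia, by lia, by lia⟩⟩
  have hthree : ¬ ∃ r : ℤ, 8 * (n : ℤ) + 1 = 3 * r ∧ IsSquare r := by
    rintro ⟨_, h, r, rfl⟩
    have := sq_emod_eight r
    lia
  rw [coeff_theta_mul_expand_theta_eq_one_iff (by norm_num), hpts,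
    odd_ncard_natPoints_norm_eq_three_mul_iff ⟨4 * n, by ring⟩, coeff_theta_eq_one_iff,
    ← Int.isSquare_natCast_iff]
  rw [eq_false hthree, xor_comm, xor_false, id_eq]
  norm_cast

lemma theta_twentyFour_pow_three : theta 24 ^ 3 = theta 8 := by
  rw [pow_succ', sq_eq_expand_two, theta_twentyFour_mul_expand_two]

lemma theta_twentyFour_mul_theta_three :
    theta 24 * theta 3 = expand 3 three_ne_zero (theta 8) := by
  refine ext_of_coeff_eq_one_iff fun n => ?_
  have hpts : (fun q : ℕ × ℕ => (q.1, 2 * q.2)) ''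
        {q | ∃ i j, i + 1 * j = n ∧ q.1 ^ 2 = 24 * i + 1 ∧ q.2 ^ 2 = 3 * j + 1} =
      natPoints {z : ℤ√(-2) | z.norm = 3 * (8 * n + 3 : ℤ) ∧ ¬ 3 ∣ z.re} := by
    ext ⟨x, w⟩
    simp only [natPoints, Zsqrtd.norm_def, Set.mem_ofPred_eq, Set.mem_image, Prod.mk.injEq]
    have := sq_emod_three x
    have := sq_emod_eight x
    constructor
    · rintro ⟨⟨_, k⟩, ⟨i, j, hn, hx, hk⟩, rfl, rfl⟩
      lia
    · intro h
      have := sq_emod_eight w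
      obtain ⟨k, rfl⟩ : 2 ∣ w := by lia
      have := sq_emod_three k
      exact ⟨(x, k), ⟨x ^ 2 / 24, k ^ 2 / 3, by lia, by lia, by lia⟩, rfl, rfl⟩
  have hinj : (fun q : ℕ × ℕ => (q.1, 2 * q.2)).Injective :=
    fun ⟨_, _⟩ ⟨_, _⟩ h => by grind
  have hnonsq : ¬ IsSquare (8 * n + 3 : ℤ) := by
    rintro ⟨r, hr⟩
    have := sq_emod_eight r
    lia
  rw [← expand_one_apply (theta 3), coeff_theta_mul_expand_theta_eq_one_iff (by norm_num),
    ← Set.ncard_image_of_injective _ hinj, hpts, odd_ncard_natPoints_norm_eq_three_mul_iff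
      ⟨4 * n + 1, by ring⟩, coeff_expand_theta_eq_one_iff]
  rw [eq_false hnonsq, xor_false, id_eq]
  constructor
  · rintro ⟨r, h, hr⟩
    obtain ⟨j, rfl⟩ : 3 ∣ n := by lia
    refine ⟨j, rfl, Int.isSquare_natCast_iff.1 ?_⟩
    convert hr using 1
    lia
  · rintro ⟨j, rfl, hj⟩
    exact ⟨(8 * j + 1 : ℕ), by lia, Int.isSquare_natCast_iff.2 hj⟩

lemma coeff_theta_twentyFour_mul_expand_seven_eq_one_iff (n : ℕ) :
    coeff n (theta 24 * expand 7 (by norm_num) (theta 24)) = 1 ↔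
      Odd (natPoints {z : ℤ√(-7) | z.norm = 24 * n + 8 ∧ Odd z.re ∧ Odd z.im}).ncard := by
  rw [coeff_theta_mul_expand_theta_eq_one_iff (by norm_num)]
  congr! 2
  ext ⟨x, y⟩
  simp only [natPoints, Zsqrtd.norm_def, Set.mem_ofPred_eq, ← Int.not_even_iff_odd,
    even_iff_two_dvd]
  have := sq_emod_three x
  have := sq_emod_eight x
  have := sq_emod_three y
  have := sq_emod_eight y
  exact ⟨fun ⟨i, j, hn, hx, hy⟩ => by lia,
    fun h => ⟨x ^ 2 / 24, y ^ 2 / 24, by lia, by lia, by lia⟩⟩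

lemma theta_twelve : theta 12 = expand 2 two_ne_zero (theta 24) := by
  refine ext_of_coeff_eq_one_iff fun n => ?_
  rw [coeff_theta_eq_one_iff, coeff_expand_theta_eq_one_iff]
  constructor
  · intro h
    obtain ⟨r, hr⟩ := Int.isSquare_natCast_iff.2 h
    have := sq_emod_eight r
    obtain ⟨j, rfl⟩ : 2 ∣ n := by lia
    exact ⟨j, rfl, by rwa [← mul_assoc] at h⟩
  · rintro ⟨j, rfl, hj⟩
    rwa [← mul_assoc]

lemma dissection_four_zero_theta_twentyFour_mul_expand_seven :
    dissection 4 0 (theta 24 * expand 7 (by norm_num) (theta 24)) = theta 24 ^ 2 := by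
  rw [sq_eq_expand_two, ← theta_twelve]
  refine ext_of_coeff_eq_one_iff fun n => ?_
  have hre (w : ℤ√(-7)) (hw : w.norm = 12 * n + 1) : w.re ≠ 0 := by
    intro h
    rw [Zsqrtd.norm_def, h] at hw
    have := sq_emod_eight w.im
    lia
  have hm : (24 * (4 * n + 0 : ℕ) + 8 : ℤ) = 2 * 2 ^ 2 * (12 * n + 1) := by push_cast; ring
  rw [coeff_dissection, coeff_theta_twentyFour_mul_expand_seven_eq_one_iff, hm,
    odd_ncard_natPoints_norm_eq_two_pow_mul_iff (by norm_num) odd_one (by norm_num) (by decide)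
      ⟨6 * n, by ring⟩ hre, coeff_theta_eq_one_iff, ← Int.isSquare_natCast_iff]
  norm_cast

lemma dissection_four_three_theta_twentyFour_mul_expand_seven :
    dissection 4 3 (theta 24 * expand 7 (by norm_num) (theta 24)) = 0 := by
  refine ext_of_coeff_eq_one_iff fun n => ?_
  have hre (w : ℤ√(-7)) (hw : w.norm = 6 * n + 5) : w.re ≠ 0 := by
    intro h
    rw [Zsqrtd.norm_def, h] at hw
    have := sq_emod_three w.im
    lia
  have hm : (24 * (4 * n + 3 : ℕ) + 8 : ℤ) = 2 * 2 ^ 3 * (6 * n + 5) := by push_cast; ring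
  rw [coeff_dissection, coeff_theta_twentyFour_mul_expand_seven_eq_one_iff, hm,
    odd_ncard_natPoints_norm_eq_two_pow_mul_iff (r := 3) (by norm_num) (by decide) (by norm_num)
      (by decide) ⟨3 * n + 2, by ring⟩ hre, map_zero]
  simp only [zero_ne_one, iff_false]
  rintro ⟨r, hr⟩
  have := sq_emod_three r
  lia

end ThetaProducts

section PartitionSection

open PowerSeries

lemma theta_three_eq :
    theta 3 = expand 4 four_ne_zero (dissection 4 0 (theta 3)) +
      X * expand 4 four_ne_zero (theta 3) := by
  have hone : dissection 4 1 (theta 3) = theta 3 := by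
    refine ext_of_coeff_eq_one_iff fun n => ?_
    rw [coeff_dissection, coeff_theta_eq_one_iff, coeff_theta_eq_one_iff,
      show 3 * (4 * n + 1) + 1 = (2 * 2) * (3 * n + 1) by ring]
    refine ⟨fun ⟨x, hx⟩ => ?_, fun h => (IsSquare.mul_self 2).mul h⟩
    have := sq_emod_eight x
    obtain ⟨y, rfl⟩ : 2 ∣ x := by lia
    exact ⟨y, by lia⟩
  have hzero {r : ℕ} (hr : r = 2 ∨ r = 3) : dissection 4 r (theta 3) = 0 := by
    refine ext_of_coeff_eq_one_iff fun n => ?_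
    rw [coeff_dissection, coeff_theta_eq_one_iff, map_zero, ← Int.isSquare_natCast_iff]
    simp only [zero_ne_one, iff_false]
    rintro ⟨x, hx⟩
    have := sq_emod_eight x
    lia
  have hsum := sum_X_pow_mul_expand_dissection four_ne_zero (theta 3)
  simpa [Finset.sum_range_succ, hone, hzero] using hsum.symm

lemma mk_b21_mul_expand :
    (mk fun n => (b21 n : ZMod 2)) * expand 4 four_ne_zero (expand 3 three_ne_zero (theta 24)) =
      theta 3 * expand 3 three_ne_zero (theta 24 * expand 7 (by norm_num) (theta 24)) := by
  set B : (ZMod 2)⟦X⟧ := mk fun n => (b21 n : ZMod 2)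
  set E := expand 3 three_ne_zero (theta 24)
  have hfour : expand 4 four_ne_zero E = E ^ 4 := by
    rw [show E ^ 4 = (E ^ 2) ^ 2 by ring, sq_eq_expand_two, sq_eq_expand_two,
      ← expand_mul 2 two_ne_zero 2 two_ne_zero E]
  have hthree : theta 24 * theta 3 = E ^ 3 := by
    rw [theta_twentyFour_mul_theta_three, ← theta_twentyFour_pow_three, map_pow]
  rw [hfour, map_mul, ← expand_mul, ← mk_b21_mul_theta]
  linear_combination (-B * E) * hthree

lemma dissection_four_one_mk_b21 :
    dissection 4 1 (mk fun n => (b21 n : ZMod 2)) =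
      theta 3 * expand 3 three_ne_zero (theta 24) := by
  set W : (ZMod 2)⟦X⟧ := theta 24 * expand 7 (by norm_num) (theta 24)
  set E := expand 3 three_ne_zero (theta 24)
  have hE : E ≠ 0 := by
    intro h
    have hcoeff : coeff 0 E = 1 := (coeff_expand_theta_eq_one_iff 24 _ 0).2 ⟨0, rfl, 1, rfl⟩
    simp [h] at hcoeff
  have hzero : dissection 4 0 (expand 3 three_ne_zero W) = E ^ 2 := by
    rw [dissection_expand (m := 4) (s := 0) (e := 0) three_ne_zero (by decide) (by norm_num) rfl,
      dissection_four_zero_theta_twentyFour_mul_expand_seven, pow_zero, one_mul, map_pow]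
  have hone : dissection 4 1 (expand 3 three_ne_zero W) = 0 := by
    rw [dissection_expand (m := 4) (s := 3) (e := 2) three_ne_zero (by decide) (by norm_num) rfl,
      dissection_four_three_theta_twentyFour_mul_expand_seven, map_zero, mul_zero]
  refine mul_right_cancel₀ hE ?_
  rw [← dissection_mul_expand four_ne_zero (by norm_num), mk_b21_mul_expand]
  conv_lhs => rw [theta_three_eq]
  rw [add_mul, map_add, mul_comm (expand 4 _ _), dissection_mul_expand _ (by norm_num), hone,
    mul_assoc, dissection_succ_X_mul, mul_comm (expand 4 _ _),
    dissection_mul_expand _ (by norm_num), hzero]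
  ring

lemma odd_b21_four_mul_add_one_iff {n : ℕ} {M : ℤ} (hM : 24 * n + 11 = 11 * M) :
    Odd (b21 (4 * n + 1)) ↔ Odd (natPoints {z : ℤ√(-24) | z.norm = 33 * M ∧ ¬ 9 ∣ z.re}).ncard := by
  have hpts : (fun q : ℕ × ℕ => (3 * q.2, q.1)) ''
        {q | ∃ i j, i + 3 * j = n ∧ q.1 ^ 2 = 3 * i + 1 ∧ q.2 ^ 2 = 24 * j + 1} =
      natPoints {z : ℤ√(-24) | z.norm = 33 * M ∧ ¬ 9 ∣ z.re} := by
    ext ⟨x, y⟩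
    simp only [natPoints, Zsqrtd.norm_def, Set.mem_ofPred_eq, Set.mem_image, Prod.mk.injEq]
    have := sq_emod_three x
    have := sq_emod_eight x
    constructor
    · rintro ⟨⟨k, y⟩, ⟨i, j, hn, hx, hk⟩, rfl, rfl⟩
      have := sq_emod_three y
      lia
    · intro h
      obtain ⟨x, rfl⟩ : 3 ∣ x := by lia
      have := sq_emod_three x
      have := sq_emod_eight x
      have := sq_emod_three y
      exact ⟨(y, x), ⟨y ^ 2 / 3, x ^ 2 / 24, by lia, by lia, by lia⟩, rfl, rfl⟩
  have hinj : (fun q : ℕ × ℕ => (3 * q.2, q.1)).Injective :=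
    fun ⟨_, _⟩ ⟨_, _⟩ h => by grind
  have hcoeff : (b21 (4 * n + 1) : ZMod 2) =
      coeff n (theta 3 * expand 3 three_ne_zero (theta 24)) := by
    rw [← dissection_four_one_mk_b21, coeff_dissection, coeff_mk]
  rw [← hpts, Set.ncard_image_of_injective _ hinj, ← ZMod.natCast_eq_one_iff_odd, hcoeff,
    coeff_theta_mul_expand_theta_eq_one_iff (by norm_num)]

end PartitionSection

section PrimePowers

lemma prime_pow_two_mul_emod_twentyFour {p : ℕ} (hp : p.Prime) (hp5 : 5 ≤ p) (j : ℕ) :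
    (p : ℤ) ^ (2 * j) % 24 = 1 := by
  have h2 := not_dvd_prime_pow hp Nat.prime_two (by lia) j
  have h3 := not_dvd_prime_pow hp Nat.prime_three (by lia) j
  have := sq_emod_three (p ^ j)
  have := sq_emod_eight (p ^ j)
  rw [mul_comm, pow_mul]
  lia

lemma odd_b21_iff_odd_ncard_posRe_norm_eq {p : ℕ} (hp : p.Prime) (hp5 : 5 ≤ p) (hp11 : p ≠ 11)
    (j : ℕ) : Odd (b21 ((11 * p ^ (2 * j) - 5) / 6)) ↔
      Odd (posRe {w : ℤ√(-24) | w.norm = (p : ℤ) ^ (2 * j) ∧ ¬ 3 ∣ w.re + w.im}).ncard := by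
  obtain ⟨t, ht⟩ : ∃ t, p ^ (2 * j) = 24 * t + 1 :=
    ⟨p ^ (2 * j) / 24, by have := prime_pow_two_mul_emod_twentyFour hp hp5 j; lia⟩
  have htZ : (p : ℤ) ^ (2 * j) = 24 * t + 1 := by exact_mod_cast ht
  rw [show (11 * p ^ (2 * j) - 5) / 6 = 4 * (11 * t) + 1 by lia,
    odd_b21_four_mul_add_one_iff (M := p ^ (2 * j)) (by rw [htZ]; push_cast; ring),
    ncard_natPoints_norm_eq_thirtyThree_mul ⟨12 * t, by rw [htZ]; ring⟩
      (not_dvd_prime_pow hp (q := 11) (by norm_num) hp11.symm _)]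

lemma re_ne_zero_and_not_three_dvd_re {p : ℕ} (hp : p.Prime) (hp5 : 5 ≤ p) {j : ℕ} {w : ℤ√(-24)}
    (hw : w.norm = (p : ℤ) ^ (2 * j)) : w.re ≠ 0 ∧ ¬ 3 ∣ w.re := by
  have := prime_pow_two_mul_emod_twentyFour hp hp5 j
  have := sq_emod_three w.re
  rw [Zsqrtd.norm_def] at hw
  exact ⟨fun h => by rw [h] at hw; lia, by lia⟩

lemma posRe_norm_eq_sq_eq_pair {p : ℕ} (hp : p.Prime) (hp5 : 5 ≤ p) {v : ℤ√(-24)}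
    (hv : v.norm = (p : ℤ) ^ 2) (hre : 0 < v.re) (him3 : ¬ 3 ∣ v.im)
    (hsum : ¬ 3 ∣ v.re + v.im) :
    posRe {w : ℤ√(-24) | w.norm = (p : ℤ) ^ 2 ∧ ¬ 3 ∣ w.re + w.im} = {(p : ℤ√(-24)), v} := by
  have hpZ : Prime (p : ℤ) := Nat.prime_iff_prime_int.1 hp
  have hp2 : ¬ (p : ℤ) ∣ 2 := not_dvd_of_prime_of_ne Nat.prime_two hp (by lia)
  have hp3 : ¬ 3 ∣ (p : ℤ) := not_dvd_of_prime_of_ne hp Nat.prime_three (by lia)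
  have hndvd {w : ℤ√(-24)} := not_dvd_of_norm_eq_sq (w := w) (by norm_num) hpZ.ne_zero
  have hre3 := (re_ne_zero_and_not_three_dvd_re (j := 1) hp hp5 hv).2
  ext z
  simp only [posRe, Set.mem_ofPred_eq, Set.mem_insert_iff, Set.mem_singleton_iff]
  constructor
  · rintro ⟨⟨hz, hz3⟩, hzre⟩
    by_cases him : z.im = 0
    · rw [Zsqrtd.norm_def, him, mul_zero, sub_zero, ← pow_two] at hz
      have := (pow_left_inj₀ hzre.le (Int.natCast_nonneg p) two_ne_zero).1 hz
      exact Or.inl (Zsqrtd.ext (by simpa using this) (by simpa using him))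
    · refine Or.inr ?_
      rcases eq_or_eq_neg_or_star_of_norm_eq_prime_pow (by norm_num) hpZ hp2
        (not_dvd_neg_twentyFour hp hp5) hz hv (hndvd hz him) (hndvd hv (by lia))
        with rfl | rfl | rfl | rfl
      · rfl
      all_goals
        simp only [Zsqrtd.re_neg, Zsqrtd.im_neg, Zsqrtd.re_star, Zsqrtd.im_star] at hz3 hzre
        lia
  · rintro (rfl | rfl)
    · simpa [Zsqrtd.norm_def, pow_two, hp.pos] using hp3
    · exact ⟨⟨hv, hsum⟩, hre⟩

lemma three_dvd_im_of_odd_ncard_posRe {p : ℕ} (hp : p.Prime) (hp5 : 5 ≤ p)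
    (h : Odd (posRe {w : ℤ√(-24) | w.norm = (p : ℤ) ^ 2 ∧ ¬ 3 ∣ w.re + w.im}).ncard)
    {w : ℤ√(-24)} (hw : w.norm = (p : ℤ) ^ 2) : 3 ∣ w.im := by
  by_contra him
  obtain ⟨v, hv, hre, him3, hsum⟩ : ∃ v : ℤ√(-24), v.norm = (p : ℤ) ^ 2 ∧ 0 < v.re ∧
      ¬ 3 ∣ v.im ∧ ¬ 3 ∣ v.re + v.im := by
    have ⟨_, _⟩ := re_ne_zero_and_not_three_dvd_re (j := 1) hp hp5 hw
    have hneg : (-w).norm = (p : ℤ) ^ 2 := (Zsqrtd.norm_neg w).trans hw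
    have hmem : 0 < w.re ∧ ¬ 3 ∣ w.re + w.im ∨ 0 < w.re ∧ ¬ 3 ∣ w.re - w.im ∨
        0 < -w.re ∧ ¬ 3 ∣ -w.re - w.im ∨ 0 < -w.re ∧ ¬ 3 ∣ -w.re + w.im := by omega
    rcases hmem with h | h | h | h
    · exact ⟨w, hw, h.1, him, h.2⟩
    · exact ⟨star w, (Zsqrtd.norm_conj w).trans hw, h.1, by simpa using him, h.2⟩
    · exact ⟨-w, hneg, h.1, by simpa using him, h.2⟩
    · exact ⟨-star w, (Zsqrtd.norm_neg _).trans ((Zsqrtd.norm_conj w).trans hw), h.1,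
        by simpa using him, by simpa using h.2⟩
  have hne : (p : ℤ√(-24)) ≠ v := by
    rintro rfl
    simp at him3
  rw [posRe_norm_eq_sq_eq_pair hp hp5 hv hre him3 hsum, Set.ncard_pair hne] at h
  exact absurd h (by decide)

lemma odd_ncard_posRe_of_forall_three_dvd_im {p : ℕ} (hp : p.Prime) (hp5 : 5 ≤ p) {j : ℕ}
    (h : ∀ w : ℤ√(-24), w.norm = (p : ℤ) ^ (2 * j) → 3 ∣ w.im) :
    Odd (posRe {w : ℤ√(-24) | w.norm = (p : ℤ) ^ (2 * j) ∧ ¬ 3 ∣ w.re + w.im}).ncard := by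
  have hset : {w : ℤ√(-24) | w.norm = (p : ℤ) ^ (2 * j) ∧ ¬ 3 ∣ w.re + w.im} =
      {w | w.norm = (p : ℤ) ^ (2 * j)} := by
    refine Set.ext fun w => and_iff_left_of_imp fun hw => ?_
    exact (dvd_add_left (h w hw)).not.2 (re_ne_zero_and_not_three_dvd_re hp hp5 hw).2
  have hp0 : (p : ℤ) ^ (2 * j) ≠ 0 := pow_ne_zero _ (by exact_mod_cast hp.ne_zero)
  rw [hset, odd_ncard_posRe_norm_eq_iff (by norm_num) hp0]
  exact (even_two_mul j).isSquare_pow _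

end PrimePowers

theorem stmt_2_general (p : ℕ) (hp : p.Prime) (hp5 : 5 ≤ p) (hp11 : p ≠ 11)
    (h : Odd (b21 ((11 * p ^ 2 - 5) / 6))) (j : ℕ) :
    Odd (b21 ((11 * p ^ (2 * j) - 5) / 6)) := by
  have hpZ : Prime (p : ℤ) := Nat.prime_iff_prime_int.1 hp
  have hp2 : ¬ (p : ℤ) ∣ 2 := not_dvd_of_prime_of_ne Nat.prime_two hp (by lia)
  have hthree (w : ℤ√(-24)) (hw : w.norm = (p : ℤ) ^ 2) : 3 ∣ w.im :=
    three_dvd_im_of_odd_ncard_posRe hp hp5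
      ((odd_b21_iff_odd_ncard_posRe_norm_eq hp hp5 hp11 1).1 h) hw
  have hnondvd (z : ℤ√(-24)) (hN : (p : ℤ) ∣ z.norm) (hz : ¬ ((p : ℤ) : ℤ√(-24)) ∣ z) :
      ∃ w : ℤ√(-24), w.norm = (p : ℤ) ^ 2 ∧ ¬ ((p : ℤ) : ℤ√(-24)) ∣ w := by
    obtain ⟨w, hw, him⟩ := exists_norm_eq_sq_and_im_ne_zero hp hp5 hN hz
    exact ⟨w, hw, not_dvd_of_norm_eq_sq (by norm_num) hpZ.ne_zero hw him⟩
  rw [odd_b21_iff_odd_ncard_posRe_norm_eq hp hp5 hp11]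
  exact odd_ncard_posRe_of_forall_three_dvd_im hp hp5 (dvd_im_of_norm_eq_pow_two_mul
    (by norm_num) hpZ hp2 (not_dvd_neg_twentyFour hp hp5) hthree hnondvd j)

theorem stmt_2 (p : ℕ) (hp : p.Prime) (hp5 : 5 ≤ p) (hp11 : p ≠ 11)
    (h : Odd (b21 ((11 * p ^ 2 - 5) / 6))) (k : ℕ) :
    Odd (b21 ((11 * p ^ (4 * k) - 5) / 6)) := by
  rw [show 4 * k = 2 * (2 * k) by ring]
  exact stmt_2_general p hp hp5 hp11 h (2 * k)
end

section
/- Let p ≥ 5 be a prime with p ≠ 11. If b₂₁((11p^2 − 5)/6) is even, then for all integers n, k ≥ 0 with p not dividing 24n + 11, one has b₂₁(4p^{6k+2} n + (11p^{6k+2} − 5)/6) ≡ 0 (mod 2). -/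
/-!
Work modulo `2` and let `f = ∏ (1 - Xⁱ) = ∑ X^((w² - 1) / 24)`, so that `(∑ b₂₁(n) Xⁿ) f = f(X²¹)`.
Then `f⁴ = f(X⁴)`, and theta series identities come from counting modulo `2` the solutions of
`w² + 2 x² = M` and `w² + 7 x² = M` in suitable residue classes, pairing each solution with a
conjugate. Together they yield `∑ b₂₁(4 n + 1) Xⁿ = T f(X³)`, where `T = ∑ X^((w² - 1) / 3)`; that
is, `b₂₁(4 n + 1)` has the parity of the number `r(48 n + 22)` of representations of `48 n + 22` by
`x² + 6 y²` with `x ≡ y ≡ 1` modulo `3`.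

Put `q = ± p ≡ 1` modulo `6`. The hypothesis says that `r(22 q²)` is even, so there is a
representation other than `q (4 + √-6)`. Dividing it by an element of norm `22` gives `π` of norm
`q²`, not a multiple of `q`, and `3 ∤ im π`, since otherwise `r(22 q²)` would be `3`.
An element of `ℤ[√-6]` of norm divisible by `q²` is divisible by `π`, its conjugate or `q`. For
`sⱼ = r(q²ʲ N)`, where `q` does not divide the nonsquare `N`, this gives `s₁ = 0` and
`sⱼ₊₂ = sⱼ₊₁ + sⱼ` modulo `2`; such a sequence has period `3`, hence `s₃ₖ₊₁ = 0`.
-/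

section Counting

variable {α : Type*} {s : Set α}

theorem ncard_cast_eq_ncard_fixedPoints (hs : s.Finite) {σ : α → α} (hmaps : Set.MapsTo σ s s)
    (hinv : ∀ x ∈ s, σ (σ x) = x) :
    (s.ncard : ZMod 2) = ({x ∈ s | σ x = x}.ncard : ZMod 2) := by
  classical
  lift s to Finset α using hs
  have hmoved : ((s.filter fun x ↦ ¬σ x = x).card : ZMod 2) = 0 := by
    rw [Finset.cast_card]
    refine Finset.sum_involution (fun x _ ↦ σ x) (fun _ _ ↦ by decide)
      (fun x hx _ ↦ (Finset.mem_filter.1 hx).2) (fun x hx ↦ ?_)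
      (fun x hx ↦ hinv x (Finset.mem_filter.1 hx).1)
    obtain ⟨hxs, hne⟩ := Finset.mem_filter.1 hx
    rw [Finset.mem_filter, hinv x hxs]
    exact ⟨hmaps hxs, Ne.symm hne⟩
  rw [Set.ncard_coe_finset, ← s.card_filter_add_card_filter_not fun x ↦ σ x = x, Nat.cast_add,
    hmoved, add_zero, ← Set.ncard_coe_finset]
  simp only [Finset.coe_filter, Finset.mem_coe]

end Counting

/-- `S` contains exactly one of `w`, `-w` for each solution `w` of `w² ≡ 1` modulo `N`, and no
other integers. Restricting to `S` counts each square congruent to `1` modulo `N` once. -/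
structure IsSignChoice (N : ℤ) (S : Set ℤ) : Prop where
  sq_modEq_one_iff (w : ℤ) : w ^ 2 ≡ 1 [ZMOD N] ↔ w ∈ S ∨ -w ∈ S
  neg_notMem {w : ℤ} : w ∈ S → -w ∉ S

namespace IsSignChoice

theorem modEq_one_three : IsSignChoice 3 {w | w ≡ 1 [ZMOD 3]} where
  sq_modEq_one_iff w := by
    have hw := Int.emod_nonneg w (by norm_num : (3 : ℤ) ≠ 0)
    have hw' := Int.emod_lt_of_pos w (by norm_num : (0 : ℤ) < 3)
    rw [Int.ModEq, sq, Int.mul_emod]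
    simp only [Set.mem_ofPred_eq, Int.ModEq]
    interval_cases h : w % 3 <;> omega
  neg_notMem {w} hw := by
    simp only [Set.mem_ofPred_eq, Int.ModEq] at hw ⊢
    omega

theorem modEq_one_four : IsSignChoice 8 {w | w ≡ 1 [ZMOD 4]} where
  sq_modEq_one_iff w := by
    have hw := Int.emod_nonneg w (by norm_num : (8 : ℤ) ≠ 0)
    have hw' := Int.emod_lt_of_pos w (by norm_num : (0 : ℤ) < 8)
    rw [Int.ModEq, sq, Int.mul_emod]
    simp only [Set.mem_ofPred_eq, Int.ModEq]
    interval_cases h : w % 8 <;> omega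
  neg_notMem {w} hw := by
    simp only [Set.mem_ofPred_eq, Int.ModEq] at hw ⊢
    omega

theorem modEq_one_six : IsSignChoice 24 {w | w ≡ 1 [ZMOD 6]} where
  sq_modEq_one_iff w := by
    have hw := Int.emod_nonneg w (by norm_num : (24 : ℤ) ≠ 0)
    have hw' := Int.emod_lt_of_pos w (by norm_num : (0 : ℤ) < 24)
    rw [Int.ModEq, sq, Int.mul_emod]
    simp only [Set.mem_ofPred_eq, Int.ModEq]
    interval_cases h : w % 24 <;> omega
  neg_notMem {w} hw := by
    simp only [Set.mem_ofPred_eq, Int.ModEq] at hw ⊢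
    omega

theorem modEq_one_four_and_not_three_dvd :
    IsSignChoice 24 {w | w ≡ 1 [ZMOD 4] ∧ ¬3 ∣ w} where
  sq_modEq_one_iff w := by
    have hw := Int.emod_nonneg w (by norm_num : (24 : ℤ) ≠ 0)
    have hw' := Int.emod_lt_of_pos w (by norm_num : (0 : ℤ) < 24)
    rw [Int.ModEq, sq, Int.mul_emod]
    simp only [Set.mem_ofPred_eq, Int.ModEq]
    interval_cases h : w % 24 <;> omega
  neg_notMem {w} hw := by
    simp only [Set.mem_ofPred_eq, Int.ModEq] at hw ⊢
    omega

theorem ncard_sq_eq {N : ℤ} {S : Set ℤ} (hS : IsSignChoice N S) (L : ℤ) :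
    {w | w ∈ S ∧ w ^ 2 = L}.ncard = if L ≡ 1 [ZMOD N] ∧ IsSquare L then 1 else 0 := by
  split_ifs with hL
  · obtain ⟨hmod, w, rfl⟩ := hL
    rw [← sq] at hmod ⊢
    wlog hw : w ∈ S generalizing w
    · simpa using this (-w) (by simpa using hmod)
        (((hS.sq_modEq_one_iff w).1 hmod).resolve_left hw)
    refine Set.ncard_eq_one.2 ⟨w, Set.ext fun x ↦ ⟨fun ⟨hxS, hx⟩ ↦ ?_, ?_⟩⟩
    · exact (sq_eq_sq_iff_eq_or_eq_neg.1 hx).resolve_right fun h ↦ hS.neg_notMem hw (h ▸ hxS)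
    · rintro rfl
      exact ⟨hw, rfl⟩
  · convert Set.ncard_empty ℤ
    refine Set.eq_empty_of_forall_notMem fun w ⟨hwS, hw⟩ ↦ hL ⟨?_, w, by rw [← hw, sq]⟩
    exact hw ▸ (hS.sq_modEq_one_iff w).2 (.inl hwS)

theorem ncard_norm_eq {N : ℤ} {S : Set ℤ} (hS : IsSignChoice N S) (d L : ℤ) :
    {α : ℤ√d | α.norm = L ∧ α.re ∈ S ∧ α.im = 0}.ncard =
      if L ≡ 1 [ZMOD N] ∧ IsSquare L then 1 else 0 := by
  rw [← hS.ncard_sq_eq L]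
  refine Set.ncard_congr (fun α _ ↦ α.re) ?_ ?_ ?_
  · rintro α ⟨hα, hre, him⟩
    exact ⟨hre, by simpa [Zsqrtd.norm_def, him, sq] using hα⟩
  · rintro α β ⟨-, -, hα⟩ ⟨-, -, hβ⟩ h
    exact Zsqrtd.ext h (hα.trans hβ.symm)
  · rintro w ⟨hw, rfl⟩
    exact ⟨w, ⟨by simp [Zsqrtd.norm_def, sq], by simpa using hw, by simp⟩, by simp⟩

end IsSignChoice

section Zsqrtd

variable {d : ℤ}

theorem finite_norm_eq (hd : d < 0) (M : ℤ) : {α : ℤ√d | α.norm = M}.Finite := by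
  refine (((Set.finite_Icc (-M) M).prod (Set.finite_Icc (-M) M)).image
    fun x ↦ (⟨x.1, x.2⟩ : ℤ√d)).subset fun α hα ↦ ⟨(α.re, α.im), ?_, rfl⟩
  have hα : α.re * α.re - d * α.im * α.im = M := by rw [← hα, Zsqrtd.norm_def]
  simp only [Set.mem_prod, Set.mem_Icc]
  refine ⟨⟨?_, ?_⟩, ?_, ?_⟩ <;>
    nlinarith [Int.le_self_sq α.re, Int.le_self_sq (-α.re), Int.le_self_sq α.im,
      Int.le_self_sq (-α.im)]

theorem mul_right_injective_of_norm_ne_zero {π : ℤ√d} (hπ : π.norm ≠ 0) :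
    Function.Injective (π * ·) := fun α β h ↦
  Zsqrtd.eq_of_smul_eq_smul_left hπ <| by
    simpa only [Zsqrtd.norm_eq_mul_conj, mul_right_comm] using congrArg (· * star π) h

theorem ncard_cast_eq_ncard_im_eq_zero {s : Set (ℤ√d)} (hs : s.Finite) (r : ℤ)
    (hstar : ∀ α ∈ s, r ∣ α.im → star α ∈ s)
    (hneg : ∀ α ∈ s, ¬r ∣ α.im → α.re ≠ 0 ∧ -star α ∈ s) :
    (s.ncard : ZMod 2) = ({α ∈ s | α.im = 0}.ncard : ZMod 2) := by
  classical
  let flip (α : ℤ√d) : ℤ√d := if r ∣ α.im then star α else -star α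
  have hflip : ∀ α ∈ s, flip α ∈ s := fun α hα ↦ by
    by_cases h : r ∣ α.im
    · simpa [flip, h] using hstar α hα h
    · simpa [flip, h] using (hneg α hα h).2
  rw [ncard_cast_eq_ncard_fixedPoints hs (σ := flip) hflip fun α _ ↦ ?_]
  · congr 3
    ext α
    refine and_congr_right fun hα ↦ ?_
    by_cases h : r ∣ α.im
    · simp only [flip, h, if_true, Zsqrtd.ext_iff, Zsqrtd.re_star, Zsqrtd.im_star, true_and]
      omega
    · have hre := (hneg α hα h).1
      have him : α.im ≠ 0 := fun h0 ↦ h (h0 ▸ dvd_zero r)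
      simp only [flip, h, if_false, Zsqrtd.ext_iff, Zsqrtd.re_neg, Zsqrtd.re_star]
      omega
  · by_cases h : r ∣ α.im <;> simp [flip, h]

/-- The elements `x + y√d` of norm `M` with `x ≡ 1` and `y ≡ t` modulo `m`, that is, the
representations of `M` by the form `x² - d y²` in a fixed residue class. -/
def normReps (d m t M : ℤ) : Set (ℤ√d) :=
  {α | α.norm = M ∧ α.re ≡ 1 [ZMOD m] ∧ α.im ≡ t [ZMOD m]}

theorem finite_normReps (hd : d < 0) (m t M : ℤ) : (normReps d m t M).Finite :=
  (finite_norm_eq hd M).subset fun _ h ↦ h.1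

end Zsqrtd

section QuadraticForms

theorem normReps_neg_two_three_mul (L : ℤ) :
    normReps (-2) 3 1 (3 * L) =
      (⟨1, 1⟩ * ·) '' {β : ℤ√(-2) | β.norm = L ∧ β.re + β.im ≡ 1 [ZMOD 3]} := by
  ext α
  constructor
  · rintro ⟨hnorm, hre, him⟩
    obtain ⟨u, hu⟩ := hre.symm.dvd
    obtain ⟨v, hv⟩ := him.symm.dvd
    have hα : (⟨1, 1⟩ : ℤ√(-2)) * ⟨u + 2 * v + 1, v - u⟩ = α := by
      ext <;> simp only [Zsqrtd.re_mul, Zsqrtd.im_mul] <;> linarith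
    refine ⟨⟨u + 2 * v + 1, v - u⟩, ⟨?_, (Int.modEq_iff_dvd.2 ⟨-v, by ring⟩)⟩, hα⟩
    rw [← hα, Zsqrtd.norm_mul] at hnorm
    exact mul_left_cancel₀ three_ne_zero hnorm
  · rintro ⟨β, ⟨rfl, hβ⟩, rfl⟩
    refine ⟨Zsqrtd.norm_mul _ _, ?_, ?_⟩
    · exact (Int.modEq_iff_dvd.2 ⟨β.im, by rw [Zsqrtd.re_mul]; ring⟩).trans hβ
    · simpa [add_comm] using hβ

theorem ncard_normReps_neg_two_of_not_three_dvd {L : ℤ} (hL : Odd L) (h3 : ¬3 ∣ L) :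
    ((normReps (-2) 3 1 (3 * L)).ncard : ZMod 2) =
      if L ≡ 1 [ZMOD 3] ∧ IsSquare L then 1 else 0 := by
  rw [normReps_neg_two_three_mul,
    Set.ncard_image_of_injective _ (mul_right_injective_of_norm_ne_zero (by decide)),
    ncard_cast_eq_ncard_im_eq_zero ((finite_norm_eq (by decide) L).subset fun _ h ↦ h.1) 3]
  · have hfixed : {α ∈ {β : ℤ√(-2) | β.norm = L ∧ β.re + β.im ≡ 1 [ZMOD 3]} | α.im = 0} =
        {α : ℤ√(-2) | α.norm = L ∧ α.re ∈ {w | w ≡ 1 [ZMOD 3]} ∧ α.im = 0} := by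
      ext α
      simp +contextual [and_assoc]
    rw [hfixed, IsSignChoice.modEq_one_three.ncard_norm_eq]
    push_cast
    rfl
  · rintro α ⟨hnorm, hα⟩ him
    refine ⟨by rw [Zsqrtd.norm_conj, hnorm], ?_⟩
    simp only [Zsqrtd.re_star, Zsqrtd.im_star, Int.ModEq] at hα ⊢
    omega
  · rintro α ⟨hnorm, hα⟩ him
    have hnorm' : α.re ^ 2 + 2 * α.im ^ 2 = L := by rw [← hnorm, Zsqrtd.norm_def]; ring
    have hre : 3 ∣ α.re := by
      by_contra hre
      obtain ⟨u, hu⟩ : 3 ∣ α.re - 2 := by simp only [Int.ModEq] at hα; omega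
      obtain ⟨v, hv⟩ : 3 ∣ α.im - 2 := by simp only [Int.ModEq] at hα; omega
      rw [sub_eq_iff_eq_add.1 hu, sub_eq_iff_eq_add.1 hv] at hnorm'
      exact h3 ⟨3 * u ^ 2 + 4 * u + 6 * v ^ 2 + 8 * v + 4, by rw [← hnorm']; ring⟩
    refine ⟨fun h0 ↦ ?_, by rw [Zsqrtd.norm_neg, Zsqrtd.norm_conj, hnorm], ?_⟩
    · rw [h0, zero_pow two_ne_zero, zero_add] at hnorm'
      exact Int.not_odd_iff_even.2 (hnorm' ▸ even_two_mul _) hL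
    · simp only [Zsqrtd.re_neg, Zsqrtd.im_neg, Zsqrtd.re_star, Zsqrtd.im_star, Int.ModEq] at hα ⊢
      omega

theorem ncard_normReps_neg_two_of_three_dvd {L : ℤ} (h3 : 3 ∣ L) :
    (normReps (-2) 3 1 (3 * L)).ncard = (normReps (-2) 3 1 L).ncard := by
  rw [normReps_neg_two_three_mul,
    Set.ncard_image_of_injective _ (mul_right_injective_of_norm_ne_zero (by decide)),
    ← Set.ncard_image_of_injective (normReps (-2) 3 1 L) neg_injective]
  congr 1
  ext α
  simp only [Set.image_neg_eq_neg, Set.mem_neg, normReps, Set.mem_ofPred_eq, Zsqrtd.norm_neg,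
    Zsqrtd.re_neg, Zsqrtd.im_neg, Int.ModEq]
  refine and_congr_right fun hnorm ↦ ⟨fun hα ↦ ?_, by omega⟩
  have hfactor : (α.re - α.im) * (α.re + α.im) = L - 3 * α.im ^ 2 := by
    rw [← hnorm, Zsqrtd.norm_def]
    ring
  have hdvd : 3 ∣ (α.re - α.im) * (α.re + α.im) := hfactor ▸ h3.sub (dvd_mul_right _ _)
  rcases Int.prime_three.dvd_or_dvd hdvd with h | h <;> omega

theorem isSquare_sq_mul_iff {a b : ℤ} (ha : a ≠ 0) : IsSquare (a ^ 2 * b) ↔ IsSquare b := by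
  refine ⟨fun ⟨r, hr⟩ ↦ ?_, fun h ↦ (IsSquare.sq a).mul h⟩
  obtain ⟨s, rfl⟩ : a ∣ r := (Int.pow_dvd_pow_iff two_ne_zero).1 ⟨b, by rw [sq r, ← hr]⟩
  exact ⟨s, mul_left_cancel₀ (pow_ne_zero 2 ha) (by rw [hr]; ring)⟩

theorem ncard_normReps_neg_two {L : ℤ} (hL : Odd L) :
    ((normReps (-2) 3 1 (3 * L)).ncard : ZMod 2) =
      if IsSquare L ∨ IsSquare (3 * L) then 1 else 0 := by
  induction h : L.natAbs using Nat.strong_induction_on generalizing L with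
  | _ l ih =>
  by_cases h3 : 3 ∣ L
  · obtain ⟨L, rfl⟩ := h3
    have hL' : Odd L := (Int.odd_mul.1 hL).2
    rw [ncard_normReps_neg_two_of_three_dvd (dvd_mul_right 3 L),
      ih L.natAbs (by rw [Int.odd_iff] at hL'; omega) hL' rfl]
    simp only [← mul_assoc, ← sq, isSquare_sq_mul_iff three_ne_zero, or_comm]
  · rw [ncard_normReps_neg_two_of_not_three_dvd hL h3]
    have hmod : IsSquare L → L ≡ 1 [ZMOD 3] := by
      rintro ⟨w, rfl⟩
      rw [← sq, IsSignChoice.modEq_one_three.sq_modEq_one_iff]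
      have hw : ¬3 ∣ w := fun hw ↦ h3 (hw.mul_right w)
      simp only [Set.mem_ofPred_eq, Int.ModEq]
      omega
    have hnot : ¬IsSquare (3 * L) := by
      rintro ⟨w, hw⟩
      obtain ⟨v, rfl⟩ := Int.prime_three.dvd_of_dvd_pow (n := 2) ⟨L, by rw [sq, ← hw]⟩
      exact h3 ⟨v ^ 2, by linarith⟩
    simp [hnot, and_iff_right_of_imp hmod]

theorem normReps_neg_seven_sixteen_mul {K : ℤ} (hK : Odd K) :
    {α ∈ normReps (-7) 4 1 (16 * K) | ¬3 ∣ α.im} =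
      (⟨-3, 1⟩ * ·) '' {β : ℤ√(-7) | β.norm = K ∧ ¬3 ∣ β.re ∧ β.re + β.im ≡ 1 [ZMOD 4]} := by
  ext α
  constructor
  · rintro ⟨⟨hnorm, hre, him⟩, h3⟩
    obtain ⟨d, hd⟩ : 16 ∣ α.re + 3 * α.im := by
      obtain ⟨k, rfl⟩ := hK
      obtain ⟨u, hu⟩ := hre.symm.dvd
      obtain ⟨v, hv⟩ := him.symm.dvd
      have hmul : (u + 3 * v + 1) * (2 * (u - 3 * v - 1) + 1) =
          2 ^ 2 * (k - 8 * v ^ 2 - 4 * v) := by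
        rw [Zsqrtd.norm_def, sub_eq_iff_eq_add.1 hu, sub_eq_iff_eq_add.1 hv] at hnorm
        linarith
      have hcop : IsCoprime (2 ^ 2 : ℤ) (2 * (u - 3 * v - 1) + 1) :=
        .pow_left ⟨-(u - 3 * v - 1), 1, by ring⟩
      obtain ⟨e, he⟩ := hcop.dvd_of_dvd_mul_right ⟨_, hmul⟩
      exact ⟨e, by linarith⟩
    have hα : (⟨-3, 1⟩ : ℤ√(-7)) * ⟨α.im - 3 * d, -d⟩ = α := by
      ext <;> simp only [Zsqrtd.re_mul, Zsqrtd.im_mul] <;> linarith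
    refine ⟨⟨α.im - 3 * d, -d⟩, ⟨?_, ?_, ?_⟩, hα⟩
    · rw [← hα, Zsqrtd.norm_mul] at hnorm
      exact mul_left_cancel₀ (by norm_num : (16 : ℤ) ≠ 0) hnorm
    · exact fun h ↦ h3 ((dvd_sub_left (dvd_mul_right 3 d)).1 h)
    · exact (Int.modEq_iff_dvd.2 ⟨d, by ring⟩).trans him
  · rintro ⟨β, ⟨rfl, hβ3, hβ⟩, rfl⟩
    refine ⟨⟨Zsqrtd.norm_mul _ _, ?_, ?_⟩, ?_⟩
    · exact (Int.modEq_iff_dvd.2 ⟨β.re + 2 * β.im, by rw [Zsqrtd.re_mul]; ring⟩).trans hβ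
    · exact (Int.modEq_iff_dvd.2 ⟨β.im, by rw [Zsqrtd.im_mul]; ring⟩).trans hβ
    · simp only [Zsqrtd.im_mul]
      omega

theorem ncard_normReps_neg_seven {K : ℤ} (hK : Odd K) :
    ({α ∈ normReps (-7) 4 1 (16 * K) | ¬3 ∣ α.im}.ncard : ZMod 2) =
      if K ≡ 1 [ZMOD 24] ∧ IsSquare K then 1 else 0 := by
  rw [normReps_neg_seven_sixteen_mul hK,
    Set.ncard_image_of_injective _ (mul_right_injective_of_norm_ne_zero (by decide)),
    ncard_cast_eq_ncard_im_eq_zero ((finite_norm_eq (by decide) K).subset fun _ h ↦ h.1) 2]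
  · have hfixed : {α ∈ {β : ℤ√(-7) | β.norm = K ∧ ¬3 ∣ β.re ∧ β.re + β.im ≡ 1 [ZMOD 4]} |
          α.im = 0} =
        {α : ℤ√(-7) | α.norm = K ∧ α.re ∈ {w | w ≡ 1 [ZMOD 4] ∧ ¬3 ∣ w} ∧ α.im = 0} := by
      ext α
      simp +contextual [and_assoc, and_left_comm]
    rw [hfixed, IsSignChoice.modEq_one_four_and_not_three_dvd.ncard_norm_eq]
    push_cast
    rfl
  · rintro α ⟨hnorm, h3, hα⟩ him
    refine ⟨by rw [Zsqrtd.norm_conj, hnorm], ?_⟩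
    simp only [Zsqrtd.re_star, Zsqrtd.im_star, Int.ModEq] at hα ⊢
    omega
  · rintro α ⟨hnorm, h3, hα⟩ him
    refine ⟨fun h0 ↦ h3 (h0 ▸ dvd_zero 3), by rw [Zsqrtd.norm_neg, Zsqrtd.norm_conj, hnorm], ?_⟩
    simp only [Zsqrtd.re_neg, Zsqrtd.im_neg, Zsqrtd.re_star, Zsqrtd.im_star, Int.ModEq] at hα ⊢
    omega

end QuadraticForms

section PowerSeries

open PowerSeries Finset.HasAntidiagonal

variable {R : Type*}

theorem pow_prime_eq_expand {p : ℕ} [hp : Fact p.Prime] (φ : (ZMod p)⟦X⟧) :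
    φ ^ p = expand p hp.out.ne_zero φ := by
  have h := MvPowerSeries.map_frobenius_expand p hp.out.ne_zero (f := φ)
  rw [ZMod.frobenius_zmod, MvPowerSeries.map_id] at h
  exact h.symm

/-- The series `∑ₙ φ_{an+r} Xⁿ` formed from the coefficients of `φ` along the progression
`an + r`. -/
noncomputable def progressionSeries [Semiring R] (a r : ℕ) (φ : R⟦X⟧) : R⟦X⟧ :=
  PowerSeries.mk fun n ↦ coeff (a * n + r) φ

theorem progressionSeries_mul_expand [CommRing R] {a r : ℕ} (hr : r < a) (φ ψ : R⟦X⟧) :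
    progressionSeries a r (φ * expand a (Nat.ne_zero_of_lt hr) ψ) =
      progressionSeries a r φ * ψ := by
  have ha := Nat.ne_zero_of_lt hr
  ext n
  rw [progressionSeries, coeff_mk, coeff_mul, coeff_mul]
  symm
  refine Finset.sum_of_injOn (fun x ↦ (a * x.1 + r, a * x.2)) ?_ ?_ ?_ ?_
  · rintro ⟨i, j⟩ _ ⟨i', j'⟩ _ h
    simpa [ha] using h
  · rintro ⟨i, j⟩ h
    simp only [Finset.mem_coe, mem_antidiagonal] at h ⊢
    rw [← h]
    ring
  · rintro ⟨i, j⟩ h hnot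
    rw [mem_antidiagonal] at h
    rw [coeff_expand_of_not_dvd, mul_zero]
    rintro ⟨c, rfl⟩
    obtain ⟨b, hb⟩ : ∃ b, n = b + c := by
      refine Nat.exists_eq_add_of_le' (Nat.lt_succ_iff.1 (Nat.lt_of_mul_lt_mul_left (a := a) ?_))
      rw [Nat.mul_succ]
      omega
    refine hnot ⟨(b, c), ?_, ?_⟩
    · exact mem_antidiagonal.2 hb.symm
    · simp only [Prod.mk.injEq, and_true]
      subst hb
      linarith
  · rintro ⟨i, j⟩ _
    rw [coeff_expand_mul, progressionSeries, coeff_mk]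

theorem coeff_mul_eq_ncard [Semiring R] {α β : Type*} {φ ψ : R⟦X⟧} {A : ℕ → Set α}
    {B : ℕ → Set β} (hA : ∀ i, (A i).Finite) (hB : ∀ j, (B j).Finite)
    (hdisj : Pairwise (Function.onFun Disjoint A)) (hφ : ∀ i, coeff i φ = (A i).ncard)
    (hψ : ∀ j, coeff j ψ = (B j).ncard) (n : ℕ) :
    coeff n (φ * ψ) = (⋃ x ∈ antidiagonal n, A x.1 ×ˢ B x.2).ncard := by
  have hunion := (antidiagonal n).finite_toSet.ncard_biUnion
    (s := fun x ↦ A x.1 ×ˢ B x.2) (fun x _ ↦ (hA x.1).prod (hB x.2)) ?_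
  · rw [finsum_mem_coe_finset] at hunion
    simp only [Finset.mem_coe] at hunion
    rw [hunion, coeff_mul]
    simp [hφ, hψ, Set.ncard_prod]
  · rintro x hx y hy hxy
    have hne : x.1 ≠ y.1 := fun h ↦ hxy ((antidiagonal_congr hx hy).2 h)
    exact Set.disjoint_prod.2 (.inl (hdisj hne))

open PowerSeries.WithPiTopology in
theorem hasProd_one_sub_X_pow_mul [CommRing R] [TopologicalSpace R] {k : ℕ} (hk : k ≠ 0) :
    HasProd (fun i ↦ (1 - X ^ (k * (i + 1)) : R⟦X⟧)) (expand k hk (pentagonalSeries R)) := by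
  rw [HasProd, tendsto_iff_coeff_tendsto]
  refine fun n ↦ tendsto_nhds_of_eventually_eq ?_
  rw [SummationFilter.unconditional_filter]
  filter_upwards [coeff_prod_one_sub_X_pow_eventually_eq R (n / k)] with s hs
  have hexpand : ∏ i ∈ s, (1 - X ^ (k * (i + 1)) : R⟦X⟧) =
      expand k hk (∏ i ∈ s, (1 - X ^ (i + 1))) := by
    simp only [map_prod, map_sub, map_one, map_pow, expand_X, pow_mul]
  rw [hexpand, coeff_expand, coeff_expand, hs]

open PowerSeries.WithPiTopology in
theorem mk_card_restricted_mul_pentagonalSeries [CommRing R] [NoZeroDivisors R] {k : ℕ}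
    (hk : 0 < k) :
    (PowerSeries.mk fun n ↦ ((Nat.Partition.restricted n (¬k ∣ ·)).card : R)) *
      pentagonalSeries R = expand k hk.ne' (pentagonalSeries R) := by
  let _ : TopologicalSpace R := ⊥
  have _ : DiscreteTopology R := ⟨rfl⟩
  rw [Nat.Partition.powerSeriesMk_card_restricted_eq_powerSeriesMk_card_countRestricted R hk,
    Nat.Partition.powerSeriesMk_card_countRestricted_eq_tprod R hk, ← tprod_one_sub_X_pow,
    ← (Nat.Partition.multipliable_powerSeriesMk_card_countRestricted R k).tprod_mul
      (multipliable_one_sub_X_pow R),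
    tprod_one_sub_X_pow, ← (hasProd_one_sub_X_pow_mul hk.ne').tprod_eq]
  refine tprod_congr fun i ↦ ?_
  simp_rw [pow_mul, geom_sum_mul_neg]
  rw [← pow_mul, ← pow_mul, mul_comm]

end PowerSeries

section SquareSeries

open PowerSeries Finset.HasAntidiagonal

/-- The series `∑ X^((w² - 1) / N)` over the squares `w² ≡ 1` modulo `N`, with coefficients
in `ZMod 2`. It is the pentagonal series for `N = 24` and the triangular one for `N = 8`. -/
noncomputable def squareSeries (N : ℕ) : (ZMod 2)⟦X⟧ :=
  PowerSeries.mk fun n ↦ if IsSquare (N * n + 1 : ℤ) then 1 else 0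

theorem mem_range_pentagonal_iff (n : ℕ) :
    n ∈ Set.range pentagonal ↔ IsSquare (24 * n + 1 : ℤ) := by
  constructor
  · rintro ⟨k, rfl⟩
    exact ⟨6 * k - 1, by linear_combination 12 * two_mul_natCast_pentagonal k⟩
  · rintro ⟨w, hw⟩
    wlog hmod : -w ≡ 1 [ZMOD 6] generalizing w
    · refine this (-w) (by simpa using hw) ?_
      rw [neg_neg]
      exact ((IsSignChoice.modEq_one_six.sq_modEq_one_iff w).1
        (Int.modEq_iff_dvd.2 ⟨-n, by rw [sq, ← hw]; ring⟩)).resolve_right hmod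
    obtain ⟨k, hk⟩ := hmod.dvd
    refine ⟨k, ?_⟩
    have hw' : w = 6 * k - 1 := by linarith
    have h := two_mul_natCast_pentagonal k
    rw [hw'] at hw
    have : (pentagonal k : ℤ) = n := by linarith
    exact_mod_cast this

theorem pentagonalSeries_eq_squareSeries : pentagonalSeries (ZMod 2) = squareSeries 24 := by
  ext n
  rw [squareSeries, coeff_mk]
  split_ifs with h <;> rw [Nat.cast_ofNat, ← mem_range_pentagonal_iff] at h
  · have hne : coeff n (pentagonalSeries (ZMod 2)) ≠ 0 := by
      rwa [Ne, coeff_pentagonalSeries_eq_zero_iff, not_not]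
    exact Fin.eq_one_of_ne_zero _ hne
  · exact coeff_pentagonalSeries_eq_zero _ h

variable {N N' : ℕ} {S S' : Set ℤ}

theorem IsSignChoice.exists_natCast (hS : IsSignChoice N S) (hN : 0 < N) {w : ℤ} (hw : w ∈ S) :
    ∃ i : ℕ, w ^ 2 - 1 = N * i := by
  have hw0 : w ≠ 0 := by
    rintro rfl
    exact hS.neg_notMem hw (by simpa using hw)
  obtain ⟨a, ha⟩ := ((hS.sq_modEq_one_iff w).2 (.inl hw)).symm.dvd
  have ha0 : 0 ≤ a := by
    refine nonneg_of_mul_nonneg_right (a := (N : ℤ)) ?_ (by exact_mod_cast hN)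
    rw [← ha]
    have := Int.one_le_abs hw0
    rw [← sq_abs]
    nlinarith
  lift a to ℕ using ha0
  exact ⟨a, ha⟩

theorem finite_mul_sq_sub_one_eq {k : ℕ} (hk : k ≠ 0) (M : ℤ) :
    {w : ℤ | k * (w ^ 2 - 1) = M}.Finite := by
  refine (Set.finite_Icc (-(|M| + 1)) (|M| + 1)).subset fun w hw ↦ ?_
  have hk' : (1 : ℤ) ≤ k := by exact_mod_cast Nat.one_le_iff_ne_zero.2 hk
  have hsq : w ^ 2 ≤ |M| + 1 := by
    have := le_abs_self M
    rw [← hw.out] at this ⊢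
    nlinarith [abs_nonneg (k * (w ^ 2 - 1))]
  exact ⟨by linarith [Int.le_self_sq (-w), neg_sq w], by linarith [Int.le_self_sq w]⟩

theorem coeff_expand_squareSeries (hS : IsSignChoice N S) (hN : 0 < N) {k : ℕ} (hk : k ≠ 0)
    (n : ℕ) : coeff n (expand k hk (squareSeries N)) =
      ({w | w ∈ S ∧ k * (w ^ 2 - 1) = N * n}.ncard : ZMod 2) := by
  have hN' : (N : ℤ) ≠ 0 := by exact_mod_cast hN.ne'
  rw [coeff_expand]
  split_ifs with hkn
  · obtain ⟨i, rfl⟩ := hkn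
    have hset : {w | w ∈ S ∧ k * (w ^ 2 - 1) = N * (k * i : ℕ)} =
        {w | w ∈ S ∧ w ^ 2 = N * i + 1} := by
      ext w
      refine and_congr_right fun _ ↦ ?_
      have hk' : (k : ℤ) ≠ 0 := by exact_mod_cast hk
      rw [Nat.cast_mul, mul_left_comm, mul_right_inj' hk', sub_eq_iff_eq_add]
    have hmod : (N * i + 1 : ℤ) ≡ 1 [ZMOD N] := Int.modEq_iff_dvd.2 ⟨-i, by ring⟩
    rw [Nat.mul_div_cancel_left i (Nat.pos_of_ne_zero hk), hset, hS.ncard_sq_eq, squareSeries,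
      coeff_mk]
    simp only [hmod, true_and]
    push_cast
    rfl
  · have hempty : {w | w ∈ S ∧ k * (w ^ 2 - 1) = N * n} = ∅ := by
      refine Set.eq_empty_of_forall_notMem fun w ⟨hw, hkw⟩ ↦ ?_
      obtain ⟨i, hi⟩ := hS.exists_natCast hN hw
      rw [hi, mul_left_comm, mul_right_inj' hN'] at hkw
      exact hkn ⟨i, by exact_mod_cast hkw.symm⟩
    rw [hempty, Set.ncard_empty, Nat.cast_zero]

theorem coeff_expand_squareSeries_mul (hS : IsSignChoice N S) (hS' : IsSignChoice N' S')
    (hN : 0 < N) (hN' : 0 < N') {k l : ℕ} (hk : k ≠ 0) (hl : l ≠ 0) (n : ℕ) :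
    coeff n (expand k hk (squareSeries N) * expand l hl (squareSeries N')) =
      ({x : ℤ × ℤ | x.1 ∈ S ∧ x.2 ∈ S' ∧
        N' * k * (x.1 ^ 2 - 1) + N * l * (x.2 ^ 2 - 1) = N * N' * n}.ncard : ZMod 2) := by
  have hN0 : (N : ℤ) ≠ 0 := by exact_mod_cast hN.ne'
  have hN0' : (N' : ℤ) ≠ 0 := by exact_mod_cast hN'.ne'
  rw [coeff_mul_eq_ncard (fun i ↦ (finite_mul_sq_sub_one_eq hk _).subset fun _ h ↦ h.2)
    (fun j ↦ (finite_mul_sq_sub_one_eq hl _).subset fun _ h ↦ h.2) ?_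
    (coeff_expand_squareSeries hS hN hk) (coeff_expand_squareSeries hS' hN' hl)]
  · congr 2
    ext ⟨w, x⟩
    simp only [Set.mem_iUnion, Set.mem_prod, Set.mem_ofPred_eq, mem_antidiagonal, Prod.exists,
      exists_prop]
    constructor
    · rintro ⟨i, j, rfl, ⟨hw, hwi⟩, hx, hxj⟩
      refine ⟨hw, hx, ?_⟩
      push_cast
      linear_combination (N' : ℤ) * hwi + N * hxj
    · rintro ⟨hw, hx, hwx⟩
      obtain ⟨i, hi⟩ := hS.exists_natCast hN hw
      obtain ⟨j, hj⟩ := hS'.exists_natCast hN' hx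
      rw [hi, hj] at hwx
      refine ⟨k * i, l * j, ?_, ⟨hw, by rw [hi]; push_cast; ring⟩, hx, by rw [hj]; push_cast; ring⟩
      have hsum : (N * N' : ℤ) * (k * i + l * j) = N * N' * n := by linear_combination hwx
      exact_mod_cast mul_left_cancel₀ (mul_ne_zero hN0 hN0') hsum
  · intro i j hij
    refine Set.disjoint_left.2 fun w ⟨_, hi⟩ ⟨_, hj⟩ ↦ hij ?_
    exact_mod_cast mul_left_cancel₀ hN0 (hi.symm.trans hj)

end SquareSeries

section Identities

open PowerSeries

theorem ncard_eq_of_mem_iff_scale {d a b : ℤ} (ha : a ≠ 0) (hb : b ≠ 0) {T : Set (ℤ × ℤ)}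
    {s : Set (ℤ√d)} (hT : ∀ w x, (w, x) ∈ T ↔ (⟨a * w, b * x⟩ : ℤ√d) ∈ s)
    (hs : ∀ α ∈ s, a ∣ α.re ∧ b ∣ α.im) : T.ncard = s.ncard := by
  refine Set.ncard_congr (fun x _ ↦ ⟨a * x.1, b * x.2⟩) (fun x hx ↦ (hT x.1 x.2).1 hx) ?_ ?_
  · intro x y _ _ hxy
    rw [Zsqrtd.ext_iff] at hxy
    exact Prod.ext (mul_left_cancel₀ ha hxy.1) (mul_left_cancel₀ hb hxy.2)
  · rintro α hα
    obtain ⟨⟨w, hw⟩, x, hx⟩ := hs α hα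
    have hαwx : (⟨a * w, b * x⟩ : ℤ√d) = α := Zsqrtd.ext hw.symm hx.symm
    exact ⟨(w, x), (hT w x).2 (hαwx ▸ hα), hαwx⟩

theorem emod_eight_of_isSquare {L : ℤ} (hL : IsSquare L) : L % 8 = 0 ∨ L % 8 = 1 ∨ L % 8 = 4 := by
  obtain ⟨w, rfl⟩ := hL
  have hw := Int.emod_nonneg w (by norm_num : (8 : ℤ) ≠ 0)
  have hw' := Int.emod_lt_of_pos w (by norm_num : (0 : ℤ) < 8)
  rw [Int.mul_emod]
  interval_cases w % 8 <;> norm_num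

theorem squareSeries_mul_expand_two :
    squareSeries 24 * expand 2 two_ne_zero (squareSeries 24) = squareSeries 8 := by
  ext n
  have hcoeff := coeff_expand_squareSeries_mul IsSignChoice.modEq_one_six
    IsSignChoice.modEq_one_six (by norm_num) (by norm_num) one_ne_zero two_ne_zero n
  rw [expand_one_apply] at hcoeff
  rw [hcoeff, squareSeries, coeff_mk, ncard_eq_of_mem_iff_scale one_ne_zero one_ne_zero
    (s := normReps (-2) 3 1 (3 * (8 * n + 1))), ncard_normReps_neg_two ⟨4 * n, by ring⟩]
  · have hnot : ¬IsSquare (3 * (8 * n + 1) : ℤ) := fun h ↦ by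
      have := emod_eight_of_isSquare h
      omega
    simp only [hnot, or_false, Nat.cast_ofNat]
  · intro w x
    simp only [normReps, Set.mem_ofPred_eq, Zsqrtd.norm_def, Int.ModEq, one_mul]
    push_cast
    constructor
    · rintro ⟨hw, hx, h⟩
      exact ⟨by linarith, by omega, by omega⟩
    · rintro ⟨h, hw, hx⟩
      have hodd : w % 2 = 1 ∧ x % 2 = 1 := by
        obtain ⟨u, rfl | rfl⟩ := Int.even_or_odd' w <;>
          obtain ⟨v, rfl | rfl⟩ := Int.even_or_odd' x <;> ring_nf at h <;> omega
      exact ⟨by omega, by omega, by linarith⟩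
  · exact fun α _ ↦ ⟨one_dvd _, one_dvd _⟩

theorem squareSeries_mul_squareSeries_three :
    squareSeries 24 * squareSeries 3 = expand 3 three_ne_zero (squareSeries 8) := by
  ext n
  have hcoeff := coeff_expand_squareSeries_mul IsSignChoice.modEq_one_six
    IsSignChoice.modEq_one_three (by norm_num) (by norm_num) one_ne_zero one_ne_zero n
  rw [expand_one_apply, expand_one_apply] at hcoeff
  rw [hcoeff, ncard_eq_of_mem_iff_scale one_ne_zero (by norm_num : (-2 : ℤ) ≠ 0)
    (s := normReps (-2) 3 1 (3 * (8 * n + 3))), ncard_normReps_neg_two ⟨4 * n + 1, by ring⟩,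
    coeff_expand]
  · have hnot : ¬IsSquare (8 * n + 3 : ℤ) := fun h ↦ by
      have := emod_eight_of_isSquare h
      omega
    simp only [hnot, false_or]
    by_cases hn : 3 ∣ n
    · obtain ⟨i, rfl⟩ := hn
      rw [if_pos (dvd_mul_right 3 i), Nat.mul_div_cancel_left i three_pos, squareSeries, coeff_mk,
        show (3 * (8 * (3 * i : ℕ) + 3) : ℤ) = 3 ^ 2 * ((8 : ℕ) * i + 1) by push_cast; ring]
      simp only [isSquare_sq_mul_iff three_ne_zero]
    · rw [if_neg hn, if_neg]
      rintro ⟨w, hw⟩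
      obtain ⟨v, rfl⟩ := Int.prime_three.dvd_of_dvd_pow (n := 2) (a := w)
        ⟨8 * n + 3, by rw [hw, sq]⟩
      ring_nf at hw
      omega
  · intro w x
    simp only [normReps, Set.mem_ofPred_eq, Zsqrtd.norm_def, Int.ModEq, one_mul]
    push_cast
    constructor
    · rintro ⟨hw, hx, h⟩
      exact ⟨by linarith, by omega, by omega⟩
    · rintro ⟨h, hw, hx⟩
      have hodd : w % 2 = 1 := by
        obtain ⟨u, rfl | rfl⟩ := Int.even_or_odd' w <;> ring_nf at h <;> omega
      exact ⟨by omega, by omega, by linarith⟩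
  · rintro α ⟨hnorm, hre, him⟩
    refine ⟨one_dvd _, Int.neg_dvd.2 ?_⟩
    rw [Zsqrtd.norm_def] at hnorm
    obtain ⟨u, hu | hu⟩ := Int.even_or_odd' α.re <;>
      obtain ⟨v, hv | hv⟩ := Int.even_or_odd' α.im <;>
      rw [hu, hv] at hnorm <;> ring_nf at hnorm <;> omega

theorem progressionSeries_squareSeries_mul :
    progressionSeries 4 1 (squareSeries 8 * expand 21 (by norm_num) (squareSeries 24)) =
      expand 12 (by norm_num) (squareSeries 24) := by
  ext n
  have hcoeff := coeff_expand_squareSeries_mul IsSignChoice.modEq_one_four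
    IsSignChoice.modEq_one_four_and_not_three_dvd (by norm_num) (by norm_num) one_ne_zero
    (by norm_num : 21 ≠ 0) (4 * n + 1)
  rw [expand_one_apply] at hcoeff
  rw [progressionSeries, coeff_mk, hcoeff, ncard_eq_of_mem_iff_scale one_ne_zero one_ne_zero
    (s := {α ∈ normReps (-7) 4 1 (16 * (2 * n + 1)) | ¬3 ∣ α.im}),
    ncard_normReps_neg_seven ⟨n, rfl⟩, coeff_expand]
  · by_cases hn : 12 ∣ n
    · obtain ⟨i, rfl⟩ := hn
      have hmod : (2 * ((12 * i : ℕ) : ℤ) + 1) ≡ 1 [ZMOD 24] :=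
        Int.modEq_iff_dvd.2 ⟨-i, by push_cast; ring⟩
      rw [if_pos (dvd_mul_right 12 i), Nat.mul_div_cancel_left i (by norm_num), squareSeries,
        coeff_mk]
      simp only [hmod, true_and]
      congr 2
      push_cast
      ring
    · rw [if_neg hn, if_neg]
      rintro ⟨hmod, -⟩
      rw [Int.ModEq] at hmod
      omega
  · intro z y
    simp only [normReps, Set.mem_ofPred_eq, Zsqrtd.norm_def, Int.ModEq, one_mul]
    push_cast
    constructor
    · rintro ⟨hz, ⟨hy, hy3⟩, h⟩
      exact ⟨⟨by linarith, hz, hy⟩, hy3⟩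
    · rintro ⟨⟨h, hz, hy⟩, hy3⟩
      exact ⟨hz, ⟨hy, hy3⟩, by linarith⟩
  · exact fun α _ ↦ ⟨one_dvd _, one_dvd _⟩

theorem coeff_squareSeries_three_mul (n : ℕ) :
    coeff n (squareSeries 3 * expand 3 three_ne_zero (squareSeries 24)) =
      ((normReps (-6) 3 1 (48 * n + 22)).ncard : ZMod 2) := by
  have hcoeff := coeff_expand_squareSeries_mul IsSignChoice.modEq_one_three
    IsSignChoice.modEq_one_six (by norm_num) (by norm_num) one_ne_zero three_ne_zero n
  rw [expand_one_apply] at hcoeff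
  rw [hcoeff, ncard_eq_of_mem_iff_scale four_ne_zero one_ne_zero
    (s := normReps (-6) 3 1 (48 * n + 22))]
  · intro x w
    simp only [normReps, Set.mem_ofPred_eq, Zsqrtd.norm_def, Int.ModEq, one_mul]
    push_cast
    constructor
    · rintro ⟨hx, hw, h⟩
      exact ⟨by linarith, by omega, by omega⟩
    · rintro ⟨h, hx, hw⟩
      have hodd : w % 2 = 1 := by
        obtain ⟨u, rfl | rfl⟩ := Int.even_or_odd' w <;> ring_nf at h <;> omega
      exact ⟨by omega, by omega, by linarith⟩
  · rintro α ⟨hnorm, hre, him⟩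
    refine ⟨?_, one_dvd _⟩
    rw [Zsqrtd.norm_def] at hnorm
    obtain ⟨v, hv | hv⟩ := Int.even_or_odd' α.im <;>
      obtain ⟨u, hu | hu⟩ := Int.even_or_odd' α.re <;>
      obtain ⟨t, ht | ht⟩ := Int.even_or_odd' u <;>
      rw [hu, ht, hv] at hnorm <;> ring_nf at hnorm <;> omega

theorem progressionSeries_mk_b21 :
    progressionSeries 4 1 (PowerSeries.mk fun n ↦ (b21 n : ZMod 2)) =
      squareSeries 3 * expand 3 three_ne_zero (squareSeries 24) := by
  set f := squareSeries 24 with hf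
  have hf0 : f ≠ 0 := fun h ↦ by simpa [hf, squareSeries] using congrArg (coeff 0) h
  have hcube : f ^ 3 = squareSeries 8 := by
    rw [← squareSeries_mul_expand_two, ← pow_prime_eq_expand]
    ring
  have hfourth : expand 4 four_ne_zero f = f ^ 4 := by
    rw [show f ^ 4 = (f ^ 2) ^ 2 by ring, pow_prime_eq_expand, pow_prime_eq_expand, ← expand_mul]
  have hb21 : (PowerSeries.mk fun n ↦ (b21 n : ZMod 2)) * f = expand 21 (by norm_num) f := by
    rw [hf, ← pentagonalSeries_eq_squareSeries]
    exact mk_card_restricted_mul_pentagonalSeries (by norm_num : 0 < 21)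
  refine mul_right_cancel₀ hf0 ?_
  calc progressionSeries 4 1 (PowerSeries.mk fun n ↦ (b21 n : ZMod 2)) * f
      = progressionSeries 4 1 (squareSeries 8 * expand 21 (by norm_num) f) := by
        rw [← progressionSeries_mul_expand (by norm_num), hfourth, ← hb21, ← hcube]
        congr 1
        ring
    _ = expand 3 three_ne_zero (expand 4 four_ne_zero f) := by
        rw [progressionSeries_squareSeries_mul, ← expand_mul]
    _ = expand 3 three_ne_zero (squareSeries 8) * expand 3 three_ne_zero f := by
        rw [hfourth, pow_succ, hcube, map_mul]
    _ = squareSeries 3 * expand 3 three_ne_zero f * f := by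
        rw [← squareSeries_mul_squareSeries_three]
        ring

theorem b21_cast_eq_ncard_normReps (n : ℕ) :
    (b21 (4 * n + 1) : ZMod 2) = ((normReps (-6) 3 1 (48 * n + 22)).ncard : ZMod 2) := by
  rw [← coeff_squareSeries_three_mul, ← progressionSeries_mk_b21, progressionSeries, coeff_mk,
    coeff_mk]

end Identities

section Hecke

variable {d q : ℤ} {π α : ℤ√d}

/-- `π` is an element of norm `q²`, for an odd prime `q` not dividing `re π` or `im π`. Then `q`
splits in `ℤ[√d]` and `π` generates the square of one of the two primes above it. -/
structure IsPrimitiveOfNormSq (q : ℤ) (π : ℤ√d) : Prop where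
  prime : Prime q
  not_dvd_two : ¬q ∣ 2
  norm_eq : π.norm = q ^ 2
  not_dvd_re : ¬q ∣ π.re
  not_dvd_im : ¬q ∣ π.im

namespace IsPrimitiveOfNormSq

theorem of_norm_eq (hd : d < -1) (hq : Prime q) (hq2 : ¬q ∣ 2) (hqd : ¬q ∣ d)
    (hnorm : π.norm = q ^ 2) (him : π.im ≠ 0) : IsPrimitiveOfNormSq q π := by
  have hsum : π.re ^ 2 - d * π.im ^ 2 = q ^ 2 := by
    rw [← hnorm, Zsqrtd.norm_def]
    ring
  have hqim : ¬q ∣ π.im := fun hdvd ↦ by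
    have hle : q ^ 2 ≤ π.im ^ 2 := Int.le_of_dvd (by positivity) (pow_dvd_pow_of_dvd hdvd 2)
    nlinarith [sq_nonneg π.re, sq_pos_of_ne_zero him]
  refine ⟨hq, hq2, hnorm, fun hdvd ↦ ?_, hqim⟩
  have hmul : q ∣ d * π.im ^ 2 := by
    have hsub := (dvd_pow hdvd two_ne_zero).sub (dvd_pow_self q two_ne_zero)
    rwa [← hsum, sub_sub_cancel] at hsub
  exact (hq.dvd_or_dvd hmul).elim hqd fun h ↦ hqim (hq.dvd_of_dvd_pow h)

protected theorem star (hπ : IsPrimitiveOfNormSq q π) : IsPrimitiveOfNormSq q (star π) where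
  prime := hπ.prime
  not_dvd_two := hπ.not_dvd_two
  norm_eq := by rw [Zsqrtd.norm_conj, hπ.norm_eq]
  not_dvd_re := hπ.not_dvd_re
  not_dvd_im := by simpa only [Zsqrtd.im_star, dvd_neg] using hπ.not_dvd_im

theorem mul_star_self (hπ : IsPrimitiveOfNormSq q π) : π * star π = (q ^ 2 : ℤ) := by
  rw [← Zsqrtd.norm_eq_mul_conj, hπ.norm_eq]

theorem pow_dvd_of_dvd_mul {x y : ℤ} (hπ : IsPrimitiveOfNormSq q π) (hx : ¬q ∣ x) {k : ℕ}
    (h : q ^ k ∣ x * y) : q ^ k ∣ y :=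
  hπ.prime.pow_dvd_of_dvd_mul_left k hx h

theorem dvd_iff (hπ : IsPrimitiveOfNormSq q π) :
    π ∣ α ↔ q ^ 2 ∣ (star π * α).im := by
  constructor
  · rintro ⟨β, rfl⟩
    rw [← mul_assoc, mul_comm (star π), hπ.mul_star_self, Zsqrtd.im_smul]
    exact dvd_mul_right _ _
  · intro him
    have hlin : π.im * (star π * α).re = q ^ 2 * α.im - π.re * (star π * α).im := by
      rw [← hπ.norm_eq, Zsqrtd.norm_def]
      simp only [Zsqrtd.re_mul, Zsqrtd.im_mul, Zsqrtd.re_star, Zsqrtd.im_star]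
      ring
    have hre : q ^ 2 ∣ (star π * α).re :=
      hπ.pow_dvd_of_dvd_mul hπ.not_dvd_im (hlin ▸ (dvd_mul_right _ _).sub (him.mul_left _))
    obtain ⟨β, hβ⟩ := (Zsqrtd.intCast_dvd _ _).2 ⟨hre, him⟩
    refine ⟨β, mul_right_injective_of_norm_ne_zero (π := star π) ?_ ?_⟩
    · rw [hπ.star.norm_eq]
      exact pow_ne_zero 2 hπ.prime.ne_zero
    · simp only [hβ, ← mul_assoc, mul_comm (star π) π, hπ.mul_star_self]

theorem im_star_mul_mul_im_mul (hπ : IsPrimitiveOfNormSq q π) (α : ℤ√d) :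
    (star π * α).im * (π * α).im = q ^ 2 * α.im ^ 2 - π.im ^ 2 * α.norm := by
  rw [← hπ.norm_eq, Zsqrtd.norm_def, Zsqrtd.norm_def]
  simp only [Zsqrtd.im_mul, Zsqrtd.re_star, Zsqrtd.im_star]
  ring

theorem pow_dvd_of_dvd_im (hπ : IsPrimitiveOfNormSq q π) {k : ℕ}
    (h : q ^ k ∣ (star π * α).im) (h' : q ^ k ∣ (π * α).im) : ((q ^ k : ℤ) : ℤ√d) ∣ α := by
  have hsub : (π * α).im - (star π * α).im = 2 * (π.im * α.re) := by
    simp only [Zsqrtd.im_mul, Zsqrtd.re_star, Zsqrtd.im_star]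
    ring
  have hadd : (π * α).im + (star π * α).im = 2 * (π.re * α.im) := by
    simp only [Zsqrtd.im_mul, Zsqrtd.re_star, Zsqrtd.im_star]
    ring
  have hre := hsub ▸ h'.sub h
  have him := hadd ▸ h'.add h
  exact (Zsqrtd.intCast_dvd _ _).2
    ⟨hπ.pow_dvd_of_dvd_mul hπ.not_dvd_im (hπ.pow_dvd_of_dvd_mul hπ.not_dvd_two hre),
      hπ.pow_dvd_of_dvd_mul hπ.not_dvd_re (hπ.pow_dvd_of_dvd_mul hπ.not_dvd_two him)⟩

theorem dvd_and_star_dvd_iff (hπ : IsPrimitiveOfNormSq q π) :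
    π ∣ α ∧ star π ∣ α ↔ ((q ^ 2 : ℤ) : ℤ√d) ∣ α := by
  constructor
  · rintro ⟨h, h'⟩
    rw [hπ.star.dvd_iff, star_star] at h'
    exact hπ.pow_dvd_of_dvd_im (hπ.dvd_iff.1 h) h'
  · rw [← hπ.mul_star_self]
    exact fun h ↦ ⟨dvd_of_mul_right_dvd h, dvd_of_mul_left_dvd h⟩

theorem dvd_or_star_dvd_or_dvd (hπ : IsPrimitiveOfNormSq q π) (h : q ^ 2 ∣ α.norm) :
    π ∣ α ∨ star π ∣ α ∨ (q : ℤ√d) ∣ α := by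
  have hmul : q ^ 2 ∣ (star π * α).im * (π * α).im := by
    rw [hπ.im_star_mul_mul_im_mul]
    exact (dvd_mul_right _ _).sub (h.mul_left _)
  rw [hπ.dvd_iff, hπ.star.dvd_iff, star_star]
  by_cases hu : q ∣ (star π * α).im
  · by_cases hv : q ∣ (π * α).im
    · have hα := hπ.pow_dvd_of_dvd_im (α := α) (k := 1)
      rw [pow_one] at hα
      exact .inr (.inr (hα hu hv))
    · rw [mul_comm] at hmul
      exact .inl (hπ.pow_dvd_of_dvd_mul hv hmul)
  · exact .inr (.inl (hπ.pow_dvd_of_dvd_mul hu hmul))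

theorem dvd_intCast_mul_iff (hπ : IsPrimitiveOfNormSq q π) :
    π ∣ q * α ↔ q ∣ (star π * α).im := by
  rw [hπ.dvd_iff, mul_left_comm, Zsqrtd.im_smul, sq,
    mul_dvd_mul_iff_left hπ.prime.ne_zero]

theorem dvd_or_star_dvd_intCast_mul_iff (hπ : IsPrimitiveOfNormSq q π) :
    π ∣ q * α ∨ star π ∣ q * α ↔ q ∣ α.norm := by
  rw [hπ.dvd_intCast_mul_iff, hπ.star.dvd_intCast_mul_iff, star_star, ← hπ.prime.dvd_mul,
    hπ.im_star_mul_mul_im_mul,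
    dvd_sub_right (dvd_mul_of_dvd_left (dvd_pow_self q two_ne_zero) _), hπ.prime.dvd_mul]
  exact or_iff_right fun h ↦ hπ.not_dvd_im (hπ.prime.dvd_of_dvd_pow h)

end IsPrimitiveOfNormSq

variable {m t M : ℤ}

theorem ncard_normReps_dvd (hm : m ∣ d) (hπ : π.norm ≠ 0) (hre : π.re ≡ 1 [ZMOD m]) :
    {α ∈ normReps d m t (π.norm * M) | π ∣ α}.ncard = (normReps d m (t - π.im) M).ncard := by
  rw [← Set.ncard_image_of_injective (normReps d m (t - π.im) M)
    (mul_right_injective_of_norm_ne_zero hπ)]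
  congr 1
  have hre_mul (β : ℤ√d) : (π * β).re ≡ β.re [ZMOD m] := by
    have hd : d ≡ 0 [ZMOD m] := Int.modEq_zero_iff_dvd.2 hm
    simpa using (hre.mul_right β.re).add ((hd.mul_right π.im).mul_right β.im)
  have him_mul {β : ℤ√d} (hβ : β.re ≡ 1 [ZMOD m]) : (π * β).im ≡ β.im + π.im [ZMOD m] := by
    simpa using (hre.mul_right β.im).add (hβ.mul_left π.im)
  ext α
  constructor
  · rintro ⟨⟨hnorm, hαre, hαim⟩, β, rfl⟩
    have hβ := (hre_mul β).symm.trans hαre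
    rw [Zsqrtd.norm_mul] at hnorm
    refine ⟨β, ⟨mul_left_cancel₀ hπ hnorm, hβ, ?_⟩, rfl⟩
    simpa using ((him_mul hβ).symm.trans hαim).sub_right π.im
  · rintro ⟨β, ⟨rfl, hβre, hβim⟩, rfl⟩
    refine ⟨⟨Zsqrtd.norm_mul _ _, (hre_mul β).trans hβre, (him_mul hβre).trans ?_⟩,
      dvd_mul_right _ _⟩
    simpa using hβim.add_right π.im

theorem ncard_normReps_intCast_dvd {a : ℤ} (hm : m ∣ d) (ha : a ≠ 0) (ha1 : a ≡ 1 [ZMOD m]) :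
    {α ∈ normReps d m t (a ^ 2 * M) | (a : ℤ√d) ∣ α}.ncard = (normReps d m t M).ncard := by
  have h := ncard_normReps_dvd (π := (a : ℤ√d)) (t := t) (M := M) hm
    (by simpa [Zsqrtd.norm_intCast] using ha) (by simpa using ha1)
  rwa [Zsqrtd.norm_intCast, ← sq, Zsqrtd.im_intCast, sub_zero] at h

namespace IsPrimitiveOfNormSq

theorem norm_ne_zero (hπ : IsPrimitiveOfNormSq q π) : π.norm ≠ 0 := by
  rw [hπ.norm_eq]
  exact pow_ne_zero 2 hπ.prime.ne_zero

theorem ncard_normReps_dvd_add_ncard_normReps_star_dvd (hπ : IsPrimitiveOfNormSq q π) (hm : m ∣ d)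
    (hre : π.re ≡ 1 [ZMOD m]) :
    {α ∈ normReps d m t (q ^ 2 * M) | π ∣ α}.ncard +
        {α ∈ normReps d m t (q ^ 2 * M) | star π ∣ α}.ncard =
      (normReps d m (t - π.im) M).ncard + (normReps d m (t + π.im) M).ncard := by
  have h := ncard_normReps_dvd (t := t) (M := M) hm hπ.norm_ne_zero hre
  have h' := ncard_normReps_dvd (π := star π) (t := t) (M := M) hm hπ.star.norm_ne_zero hre
  rw [hπ.norm_eq] at h
  rw [hπ.star.norm_eq, Zsqrtd.im_star, sub_neg_eq_add] at h'
  rw [h, h']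

theorem ncard_normReps_sq_mul (hπ : IsPrimitiveOfNormSq q π) (hd : d < 0) (hm : m ∣ d)
    (hre : π.re ≡ 1 [ZMOD m]) (hq : q ≡ 1 [ZMOD m]) (hM : ¬q ∣ M) :
    (normReps d m t (q ^ 2 * M)).ncard =
      (normReps d m (t - π.im) M).ncard + (normReps d m (t + π.im) M).ncard +
        (normReps d m t M).ncard := by
  set s := normReps d m t (q ^ 2 * M) with hs
  have hfin : s.Finite := finite_normReps hd m t _
  have hdisj : ∀ α ∈ s, (q : ℤ√d) ∣ α → ¬(π ∣ α ∨ star π ∣ α) := by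
    rintro _ ⟨hnorm, -⟩ ⟨β, rfl⟩
    rw [hπ.dvd_or_star_dvd_intCast_mul_iff]
    rw [Zsqrtd.norm_mul, Zsqrtd.norm_intCast, ← sq] at hnorm
    rwa [mul_left_cancel₀ (pow_ne_zero 2 hπ.prime.ne_zero) hnorm]
  have hunion : s = {α ∈ s | π ∣ α} ∪ {α ∈ s | star π ∣ α} ∪ {α ∈ s | (q : ℤ√d) ∣ α} := by
    ext α
    have hα (h : α ∈ s) := hπ.dvd_or_star_dvd_or_dvd (α := α) (h.1 ▸ dvd_mul_right _ _)
    simp only [Set.mem_union, Set.mem_ofPred_eq]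
    tauto
  have hsplit : Disjoint {α ∈ s | π ∣ α} {α ∈ s | star π ∣ α} := by
    refine Set.disjoint_left.2 fun α ⟨hα, h⟩ ⟨_, h'⟩ ↦ hdisj α hα ?_ (.inl h)
    refine dvd_trans ?_ (hπ.dvd_and_star_dvd_iff.1 ⟨h, h'⟩)
    exact (Zsqrtd.intCast_dvd_intCast _ _).2 (dvd_pow_self q two_ne_zero)
  have hsplit' : Disjoint ({α ∈ s | π ∣ α} ∪ {α ∈ s | star π ∣ α})
      {α ∈ s | (q : ℤ√d) ∣ α} := by
    refine Set.disjoint_left.2 fun α h ⟨hα, hqα⟩ ↦ hdisj α hα hqα ?_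
    exact h.imp And.right And.right
  rw [← hπ.ncard_normReps_dvd_add_ncard_normReps_star_dvd hm hre,
    ← ncard_normReps_intCast_dvd (M := M) hm hπ.prime.ne_zero hq, ← hs,
    ← Set.ncard_union_eq hsplit (hfin.subset fun _ h ↦ h.1) (hfin.subset fun _ h ↦ h.1),
    ← Set.ncard_union_eq hsplit' (hfin.subset ?_) (hfin.subset fun _ h ↦ h.1), ← hunion]
  exact Set.union_subset (fun _ h ↦ h.1) fun _ h ↦ h.1

theorem ncard_normReps_pow_four_mul (hπ : IsPrimitiveOfNormSq q π) (hd : d < 0) (hm : m ∣ d)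
    (hre : π.re ≡ 1 [ZMOD m]) (hq : q ≡ 1 [ZMOD m]) :
    (normReps d m t (q ^ 4 * M)).ncard + (normReps d m t M).ncard =
      (normReps d m (t - π.im) (q ^ 2 * M)).ncard +
        (normReps d m (t + π.im) (q ^ 2 * M)).ncard := by
  have hpow : q ^ 4 * M = q ^ 2 * (q ^ 2 * M) := by ring
  have hpow' : q ^ 4 * M = (q ^ 2) ^ 2 * M := by ring
  set s := normReps d m t (q ^ 4 * M) with hs
  have hfin : s.Finite := finite_normReps hd m t _
  have hunion : s = {α ∈ s | π ∣ α} ∪ {α ∈ s | star π ∣ α} := by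
    ext α
    simp only [Set.mem_union, Set.mem_ofPred_eq, ← and_or_left]
    refine ⟨fun hα ↦ ⟨hα, ?_⟩, And.left⟩
    have hnorm := hα.1
    rw [hpow] at hnorm
    obtain h | h | ⟨β, rfl⟩ := hπ.dvd_or_star_dvd_or_dvd (hnorm ▸ dvd_mul_right _ _)
    · exact .inl h
    · exact .inr h
    · rw [Zsqrtd.norm_mul, Zsqrtd.norm_intCast, ← sq] at hnorm
      rw [hπ.dvd_or_star_dvd_intCast_mul_iff,
        mul_left_cancel₀ (pow_ne_zero 2 hπ.prime.ne_zero) hnorm]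
      exact dvd_mul_of_dvd_left (dvd_pow_self q two_ne_zero) M
  have hinter : {α ∈ s | π ∣ α} ∩ {α ∈ s | star π ∣ α} =
      {α ∈ s | ((q ^ 2 : ℤ) : ℤ√d) ∣ α} := by
    rw [← Set.sep_and]
    simp only [hπ.dvd_and_star_dvd_iff]
  rw [← hπ.ncard_normReps_dvd_add_ncard_normReps_star_dvd hm hre,
    ← ncard_normReps_intCast_dvd (M := M) hm (pow_ne_zero 2 hπ.prime.ne_zero)
      (by simpa using hq.pow 2),
    ← hpow', ← hpow, ← hs, ← hinter,
    ← Set.ncard_union_add_ncard_inter {α ∈ s | π ∣ α} {α ∈ s | star π ∣ α}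
      (hfin.subset fun _ h ↦ h.1) (hfin.subset fun _ h ↦ h.1), ← hunion]

end IsPrimitiveOfNormSq

end Hecke

section ModThree

variable {d m t t' M N q : ℤ} {π : ℤ√d}

theorem normReps_congr (h : t ≡ t' [ZMOD m]) : normReps d m t M = normReps d m t' M :=
  Set.ext fun _ ↦ and_congr_right fun _ ↦ and_congr_right fun _ ↦
    ⟨fun hα ↦ hα.trans h, fun hα ↦ hα.trans h.symm⟩

theorem ncard_normReps_neg : (normReps d m (-t) M).ncard = (normReps d m t M).ncard := by
  rw [← Set.ncard_image_of_injective (normReps d m t M) star_injective]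
  congr 1
  ext α
  rw [Set.image_star, Set.mem_star]
  refine and_congr (by rw [Zsqrtd.norm_conj]) (and_congr_right fun _ ↦ ?_)
  rw [Zsqrtd.im_star, ← Int.neg_modEq_neg, neg_neg]

theorem ncard_normReps_zero_cast (hd : d < 0) (hM : ¬IsSquare M) :
    ((normReps d m 0 M).ncard : ZMod 2) = 0 := by
  have hempty : {α ∈ normReps d m 0 M | α.im = 0} = ∅ := by
    refine Set.eq_empty_of_forall_notMem fun α ⟨hα, him⟩ ↦ hM ⟨α.re, ?_⟩
    rw [← hα.1, Zsqrtd.norm_def, him, mul_zero, sub_zero]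
  rw [ncard_cast_eq_ncard_im_eq_zero (finite_normReps hd m 0 M) 1 ?_
      fun α _ h ↦ (h (one_dvd _)).elim,
    hempty, Set.ncard_empty, Nat.cast_zero]
  rintro α ⟨hnorm, hre, him⟩ -
  exact ⟨by rw [Zsqrtd.norm_conj, hnorm], hre, by simpa using him.neg⟩

theorem ncard_normReps_sub_add_cast (hd : d < 0) (hM : ¬IsSquare M) {b : ℤ} (hb : ¬3 ∣ b) :
    ((normReps d 3 (1 - b) M).ncard + (normReps d 3 (1 + b) M).ncard : ZMod 2) =
      (normReps d 3 1 M).ncard := by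
  rw [← ncard_normReps_neg (t := 1)]
  obtain h | h : b ≡ 1 [ZMOD 3] ∨ b ≡ -1 [ZMOD 3] := by
    simp only [Int.ModEq]
    omega
  · rw [normReps_congr (h.sub_left 1), normReps_congr (t := 1 + b) (t' := -1)
      ((h.add_left 1).trans (by decide)), sub_self, ncard_normReps_zero_cast hd hM, zero_add]
  · rw [normReps_congr (h.add_left 1), normReps_congr (t := 1 - b) (t' := -1)
      ((h.sub_left 1).trans (by decide)), add_neg_cancel, ncard_normReps_zero_cast hd hM, add_zero]

theorem IsPrimitiveOfNormSq.ncard_normReps_pow_mul_cast (hπ : IsPrimitiveOfNormSq q π) (hd : d < 0)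
    (h3 : 3 ∣ d) (hre : π.re ≡ 1 [ZMOD 3]) (hq : q ≡ 1 [ZMOD 3]) (him : ¬3 ∣ π.im)
    (hN : ¬IsSquare N) (hqN : ¬q ∣ N) (k : ℕ) :
    ((normReps d 3 1 (q ^ (2 * (3 * k + 1)) * N)).ncard : ZMod 2) = 0 := by
  let s (j : ℕ) : ZMod 2 := (normReps d 3 1 (q ^ (2 * j) * N)).ncard
  have hone : s 1 = 0 := by
    have h := congrArg (Nat.cast (R := ZMod 2))
      (hπ.ncard_normReps_sq_mul (t := 1) hd h3 hre hq hqN)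
    push_cast at h
    rwa [ncard_normReps_sub_add_cast hd hN him, CharTwo.add_self_eq_zero] at h
  have hrec (j : ℕ) : s (j + 2) = s (j + 1) + s j := by
    have hns : ¬IsSquare (q ^ 2 * (q ^ (2 * j) * N)) := by
      rwa [isSquare_sq_mul_iff hπ.prime.ne_zero, mul_comm 2 j, pow_mul,
        isSquare_sq_mul_iff (pow_ne_zero j hπ.prime.ne_zero)]
    have h := congrArg (Nat.cast (R := ZMod 2)) (hπ.ncard_normReps_pow_four_mul (t := 1)
      (M := q ^ (2 * j) * N) hd h3 hre hq)
    push_cast at h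
    rw [ncard_normReps_sub_add_cast hd hns him, ← CharTwo.sub_eq_add, sub_eq_iff_eq_add] at h
    simpa only [s, mul_add, pow_add, mul_assoc, mul_left_comm, Nat.reduceMul] using h
  have hperiod (j : ℕ) : s (j + 3) = s j := by
    rw [hrec (j + 1), hrec j, add_right_comm, CharTwo.add_self_eq_zero, zero_add]
  change s (3 * k + 1) = 0
  induction k with
  | zero => exact hone
  | succ k ih => rwa [mul_add_one, add_right_comm, hperiod]

end ModThree

section NormTwentyTwo

theorem exists_dvd_of_twentyTwo_dvd_norm {α : ℤ√(-6)} (h : 22 ∣ α.norm) :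
    ∃ ε : ℤ, ε ^ 2 = 1 ∧ ⟨4, ε⟩ ∣ α := by
  obtain ⟨K, hK⟩ := h
  rw [Zsqrtd.norm_def] at hK
  have hre : 2 ∣ α.re :=
    Int.prime_two.dvd_of_dvd_pow (n := 2) ⟨11 * K - 3 * α.im ^ 2, by linarith⟩
  have hdvd : 11 ∣ (4 * α.im - α.re) * (4 * α.im + α.re) := ⟨2 * α.im ^ 2 - 2 * K, by linarith⟩
  rcases (by norm_num : Prime (11 : ℤ)).dvd_or_dvd hdvd with h11 | h11
  · obtain ⟨v, hv⟩ : 22 ∣ 4 * α.im - α.re := by omega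
    refine ⟨1, rfl, ⟨α.im - 4 * v, v⟩, ?_⟩
    ext <;> simp only [Zsqrtd.re_mul, Zsqrtd.im_mul] <;> linarith
  · obtain ⟨v, hv⟩ : 22 ∣ 4 * α.im + α.re := by omega
    refine ⟨-1, rfl, ⟨4 * v - α.im, v⟩, ?_⟩
    ext <;> simp only [Zsqrtd.re_mul, Zsqrtd.im_mul] <;> linarith

theorem normReps_neg_six_twentyTwo : normReps (-6) 3 1 22 = {⟨4, 1⟩} := by
  refine Set.eq_singleton_iff_unique_mem.2
    ⟨⟨by decide, by decide, by decide⟩, fun α ⟨hnorm, hre, him⟩ ↦ ?_⟩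
  rw [Zsqrtd.norm_def] at hnorm
  rw [Int.ModEq] at hre him
  have him_one : α.im = 1 := by
    have hle : α.im ≤ 1 := by nlinarith
    have hge : -1 ≤ α.im := by nlinarith
    omega
  have hre_four : α.re = 4 := by
    have hsq : α.re ^ 2 = 4 ^ 2 := by
      rw [him_one] at hnorm
      linarith
    refine (sq_eq_sq_iff_eq_or_eq_neg.1 hsq).resolve_right ?_
    omega
  exact Zsqrtd.ext hre_four him_one

variable {q : ℤ}

theorem exists_mem_normReps_ne (hq : q ≡ 1 [ZMOD 3])
    (h : ((normReps (-6) 3 1 (q ^ 2 * 22)).ncard : ZMod 2) = 0) :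
    ∃ α ∈ normReps (-6) 3 1 (q ^ 2 * 22), α ≠ q * ⟨4, 1⟩ := by
  by_contra! hα
  have hmem : (q * ⟨4, 1⟩ : ℤ√(-6)) ∈ normReps (-6) 3 1 (q ^ 2 * 22) := by
    refine ⟨by rw [Zsqrtd.norm_mul, Zsqrtd.norm_intCast, ← sq]; rfl, ?_, ?_⟩
    · rw [Zsqrtd.re_smul]
      exact hq.mul_right 4
    · rw [Zsqrtd.im_smul]
      exact hq.mul_right 1
  have hsingleton : normReps (-6) 3 1 (q ^ 2 * 22) = {(q * ⟨4, 1⟩ : ℤ√(-6))} :=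
    Set.Subset.antisymm hα (Set.singleton_subset_iff.2 hmem)
  rw [hsingleton, Set.ncard_singleton] at h
  exact absurd h (by decide)

theorem exists_norm_eq_sq (hq : q ≡ 1 [ZMOD 3])
    (h : ((normReps (-6) 3 1 (q ^ 2 * 22)).ncard : ZMod 2) = 0) :
    ∃ π : ℤ√(-6), π.norm = q ^ 2 ∧ π.re ≡ 1 [ZMOD 3] ∧ π.im ≠ 0 := by
  obtain ⟨α, ⟨hnorm, hre, him⟩, hne⟩ := exists_mem_normReps_ne hq h
  obtain ⟨ε, hε, π, rfl⟩ := exists_dvd_of_twentyTwo_dvd_norm (hnorm ▸ dvd_mul_left _ _)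
  have hπ : π.norm = q ^ 2 := by
    have h22 : (⟨4, ε⟩ : ℤ√(-6)).norm = 22 := by
      rw [Zsqrtd.norm_def]
      linarith
    rw [Zsqrtd.norm_mul, h22, mul_comm] at hnorm
    exact mul_right_cancel₀ (by norm_num) hnorm
  have hπre : π.re ≡ 1 [ZMOD 3] :=
    (Int.modEq_iff_dvd.2 ⟨π.re - 2 * ε * π.im, by rw [Zsqrtd.re_mul]; ring⟩).trans hre
  refine ⟨π, hπ, hπre, fun h0 ↦ hne ?_⟩
  rw [Int.ModEq] at hq hπre
  have hπq : π.re = q := by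
    have hsq : π.re ^ 2 = q ^ 2 := by rw [← hπ, Zsqrtd.norm_def, h0]; ring
    refine (sq_eq_sq_iff_eq_or_eq_neg.1 hsq).resolve_right ?_
    omega
  have hε1 : ε = 1 := by
    rcases sq_eq_one_iff.1 hε with rfl | rfl
    · rfl
    · have : -q ≡ 1 [ZMOD 3] := by simpa [h0, hπq] using him
      rw [Int.ModEq] at this
      omega
  rw [hε1, mul_comm]
  congr 1
  exact Zsqrtd.ext (by rw [hπq, Zsqrtd.re_intCast]) (by rw [h0, Zsqrtd.im_intCast])

theorem exists_isPrimitiveOfNormSq (hprime : Prime q) (hq22 : ¬q ∣ 22) (hq : q ≡ 1 [ZMOD 3])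
    (h : ((normReps (-6) 3 1 (q ^ 2 * 22)).ncard : ZMod 2) = 0) :
    ∃ π : ℤ√(-6), IsPrimitiveOfNormSq q π ∧ π.re ≡ 1 [ZMOD 3] ∧ ¬3 ∣ π.im := by
  obtain ⟨π, hnorm, hre, him⟩ := exists_norm_eq_sq hq h
  have hq2 : ¬q ∣ 2 := fun h2 ↦ hq22 (h2.trans (by norm_num))
  have hq3 : ¬q ∣ 3 := fun h3 ↦ by
    obtain ⟨r, hr⟩ := hq.dvd
    have hdvd : q ∣ q + 3 * r := dvd_rfl.add (h3.mul_right r)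
    rw [← hr, add_sub_cancel] at hdvd
    exact hprime.not_isUnit (isUnit_of_dvd_one hdvd)
  have hq6 : ¬q ∣ -6 := by
    rw [dvd_neg, show (6 : ℤ) = 2 * 3 by norm_num, hprime.dvd_mul]
    exact not_or_intro hq2 hq3
  have hπ := IsPrimitiveOfNormSq.of_norm_eq (by norm_num) hprime hq2 hq6 hnorm him
  refine ⟨π, hπ, hre, fun h3 ↦ ?_⟩
  have hone (b : ℤ) (hb : 3 ∣ b) : (normReps (-6) 3 (1 + b) 22).ncard = 1 := by
    rw [normReps_congr (t' := 1), normReps_neg_six_twentyTwo, Set.ncard_singleton]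
    simpa using (Int.modEq_zero_iff_dvd.2 hb).add_left 1
  have hcount := hπ.ncard_normReps_sq_mul (t := 1) (by norm_num) (by norm_num) hre hq hq22
  rw [sub_eq_add_neg, hone _ h3.neg_right, hone _ h3, normReps_neg_six_twentyTwo,
    Set.ncard_singleton] at hcount
  rw [hcount] at h
  exact absurd h (by decide)

end NormTwentyTwo

theorem exists_natAbs_eq_and_modEq_one_six {p : ℕ} (hp : p.Prime) (hp5 : 5 ≤ p) :
    ∃ q : ℤ, q.natAbs = p ∧ q ≡ 1 [ZMOD 6] := by
  have h2 : ¬2 ∣ p := fun h ↦ by have := (Nat.prime_dvd_prime_iff_eq Nat.prime_two hp).1 h; omega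
  have h3 : ¬3 ∣ p := fun h ↦ by have := (Nat.prime_dvd_prime_iff_eq Nat.prime_three hp).1 h; omega
  obtain h | h : (p : ℤ) ≡ 1 [ZMOD 6] ∨ -(p : ℤ) ≡ 1 [ZMOD 6] := by
    have hmod : p % 6 = 1 ∨ p % 6 = 5 := by omega
    simp only [Int.ModEq]
    omega
  · exact ⟨p, Int.natAbs_natCast p, h⟩
  · exact ⟨-p, by simp, h⟩

theorem b21_cast_eq_ncard_normReps_pow_mul {q : ℤ} (hq : q ≡ 1 [ZMOD 6]) (j n : ℕ) :
    (b21 (4 * q.natAbs ^ (2 * j) * n + (11 * q.natAbs ^ (2 * j) - 5) / 6) : ZMod 2) =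
      (normReps (-6) 3 1 (q ^ (2 * j) * (2 * (24 * n + 11)))).ncard := by
  have hcast : q ^ (2 * j) = (q.natAbs ^ (2 * j) : ℕ) := by
    rw [pow_mul, pow_mul, Nat.cast_pow, Nat.cast_pow, Int.natCast_natAbs, sq_abs]
  have hmod : q ^ (2 * j) ≡ 1 [ZMOD 24] := by
    rw [pow_mul]
    simpa using ((IsSignChoice.modEq_one_six.sq_modEq_one_iff q).2 (.inl hq)).pow j
  rw [hcast] at hmod ⊢
  obtain ⟨i, hi⟩ : ∃ i, q.natAbs ^ (2 * j) = 24 * i + 1 :=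
    ⟨q.natAbs ^ (2 * j) / 24, by rw [Int.ModEq] at hmod; omega⟩
  rw [hi, show 4 * (24 * i + 1) * n + (11 * (24 * i + 1) - 5) / 6 =
      4 * ((24 * i + 1) * n + 11 * i) + 1 by
    rw [show (11 * (24 * i + 1) - 5) / 6 = 44 * i + 1 by omega]
    ring, b21_cast_eq_ncard_normReps]
  congr 3
  push_cast
  ring

theorem stmt_3 (p : ℕ) (hp : p.Prime) (hp5 : 5 ≤ p) (hp11 : p ≠ 11)
    (h : Even (b21 ((11 * p ^ 2 - 5) / 6)))
    (n k : ℕ) (hn : ¬ p ∣ (24 * n + 11)) :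
    b21 (4 * p ^ (6 * k + 2) * n + (11 * p ^ (6 * k + 2) - 5) / 6) % 2 = 0 := by
  obtain ⟨q, rfl, hq6⟩ := exists_natAbs_eq_and_modEq_one_six hp hp5
  have hq : Prime q := Int.prime_iff_natAbs_prime.2 hp
  have hq3 : q ≡ 1 [ZMOD 3] := hq6.of_dvd (by norm_num)
  have hdvd (a : ℕ) : q ∣ a ↔ q.natAbs ∣ a := Int.natAbs_dvd_natAbs.symm
  have hq2 : ¬q ∣ 2 := fun h2 ↦ absurd (Nat.le_of_dvd two_pos ((hdvd 2).1 h2)) (by omega)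
  have hq11 : ¬q ∣ 11 := fun h11 ↦
    hp11 ((Nat.prime_dvd_prime_iff_eq hp (by norm_num)).1 ((hdvd 11).1 h11))
  have hqN (a : ℤ) (ha : ¬q ∣ a) : ¬q ∣ 2 * a := fun h ↦ (hq.dvd_or_dvd h).elim hq2 ha
  have hnsq : ¬IsSquare (2 * (24 * n + 11) : ℤ) := fun hsq ↦ by
    have := emod_eight_of_isSquare hsq
    omega
  have hbase : ((normReps (-6) 3 1 (q ^ 2 * 22)).ncard : ZMod 2) = 0 := by
    rw [← ZMod.natCast_eq_zero_iff_even] at h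
    simpa [h] using (b21_cast_eq_ncard_normReps_pow_mul hq6 1 0).symm
  obtain ⟨π, hπ, hre, him⟩ := exists_isPrimitiveOfNormSq hq (hqN 11 hq11) hq3 hbase
  rw [← Nat.even_iff, ← ZMod.natCast_eq_zero_iff_even, show 6 * k + 2 = 2 * (3 * k + 1) by ring,
    b21_cast_eq_ncard_normReps_pow_mul hq6]
  exact hπ.ncard_normReps_pow_mul_cast (by norm_num) (by norm_num) hre hq3 him hnsq
    (hqN _ (mod_cast (hdvd _).not.2 hn)) k
end
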